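/- arXiv:1103.3401 — 5 statements merged into one kernel-verified Lean document; each statement's English description precedes it below -/
import Mathlib

section
/- Let (X,d) be a proper complete separable metric space with base point x0, 1 <= p < infinity, and f: X -> X a continuous map whose pushforward f_* is a w_p-continuous self-map of P_p(X). Let q: X -> (P_p(X), w_p) be a continuous Markov kernel with M := sup over x in X of w_p(q(x), delta_{f(x)}) < infinity. Then the map P defined by P(mu)(B) = integral over X of q(x)(B) dmu(x) maps P_p(X) into itself, is w_p-continuous, is convex linear, and satisfies w_p(P(mu), f_*(mu)) <= M for every mu in P_p(X); i.e. P is an MW-map of order p relative to f with noise level M. -/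
open MeasureTheory Topology Filter Metric Set
open scoped ENNReal NNReal

noncomputable section

variable {X : Type*}

/-- `π` is a coupling of `μ` and `ν`, i.e. a measure on `X × X` with marginals `μ` and `ν`. -/
def IsCoupling [MeasurableSpace X] (π : Measure (X × X)) (μ ν : Measure X) : Prop :=
  π.map Prod.fst = μ ∧ π.map Prod.snd = ν

/-- The `p`-th power optimal transport cost between `μ` and `ν`. -/
def wCost [MetricSpace X] [MeasurableSpace X] (p : ℝ) (μ ν : Measure X) : ℝ≥0∞ :=
  ⨅ π ∈ {π : Measure (X × X) | IsProbabilityMeasure π ∧ IsCoupling π μ ν},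
    ∫⁻ q, ENNReal.ofReal (dist q.1 q.2 ^ p) ∂π

/-- The Wasserstein distance of order `p` (the `p`-th root of the optimal cost), as a real
number. -/
def Wp [MetricSpace X] [MeasurableSpace X] (p : ℝ) (μ ν : Measure X) : ℝ :=
  ((wCost p μ ν) ^ (1 / p)).toReal

/-- `μ` has finite `p`-th moment about the base point `x₀`. -/
def FiniteMoment [MetricSpace X] [MeasurableSpace X] (p : ℝ) (x₀ : X) (μ : Measure X) : Prop :=
  ∫⁻ x, ENNReal.ofReal (dist x₀ x ^ p) ∂μ < ⊤

/-- The Wasserstein space `P_p(X)`: Borel probability measures with finite `p`-th moment. -/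
def Pp [MetricSpace X] [MeasurableSpace X] (p : ℝ) (x₀ : X) : Set (Measure X) :=
  {μ | IsProbabilityMeasure μ ∧ FiniteMoment p x₀ μ}

/-- The convex combination `t • μ + (1 - t) • ν` of two measures. -/
def mix [MeasurableSpace X] (t : ℝ) (μ ν : Measure X) : Measure X :=
  ENNReal.ofReal t • μ + ENNReal.ofReal (1 - t) • ν

/-- `μₙ → μ` in the weak topology: integrals of bounded continuous functions converge. -/
def WeakConv [MeasurableSpace X] [TopologicalSpace X] (μs : ℕ → Measure X) (μ : Measure X) :
    Prop :=
  ∀ g : BoundedContinuousFunction X ℝ,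
    Tendsto (fun n => ∫ x, g x ∂(μs n)) atTop (𝓝 (∫ x, g x ∂μ))

/-- `μₙ → μ` with respect to the Wasserstein distance of order `p`. -/
def WpTendsto [MetricSpace X] [MeasurableSpace X] (p : ℝ) (μs : ℕ → Measure X)
    (μ : Measure X) : Prop :=
  Tendsto (fun n => Wp p (μs n) μ) atTop (𝓝 0)

/-- A set of measures is sequentially compact for the Wasserstein distance of order `p`. -/
def WpSeqCompact [MetricSpace X] [MeasurableSpace X] (p : ℝ) (S : Set (Measure X)) : Prop :=
  ∀ μs : ℕ → Measure X, (∀ n, μs n ∈ S) →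
    ∃ μ ∈ S, ∃ φ : ℕ → ℕ, StrictMono φ ∧ WpTendsto p (fun n => μs (φ n)) μ

/-- A set of measures is sequentially compact for the weak topology. -/
def WeakSeqCompact [MeasurableSpace X] [TopologicalSpace X] (S : Set (Measure X)) : Prop :=
  ∀ μs : ℕ → Measure X, (∀ n, μs n ∈ S) →
    ∃ μ ∈ S, ∃ φ : ℕ → ℕ, StrictMono φ ∧ WeakConv (fun n => μs (φ n)) μ

set_option linter.unusedSectionVars false

namespace MWAux

lemma cost_eq [MetricSpace X] {p : ℝ} (hp : 1 ≤ p) (x y : X) :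
    ENNReal.ofReal (dist x y ^ p) = edist x y ^ p := by
  rw [edist_dist, ENNReal.ofReal_rpow_of_nonneg dist_nonneg (by linarith)]

lemma edist_tri [MetricSpace X] {p : ℝ} (hp : 1 ≤ p) (x y z : X) :
    edist x y ^ p ≤ 2 ^ (p - 1) * (edist x z ^ p + edist z y ^ p) :=
  (ENNReal.rpow_le_rpow (edist_triangle x z y) (by linarith)).trans
    ((ENNReal.rpow_add_le_mul_rpow_add_rpow _ _ hp).trans_eq (by ring))

lemma two_ne_top (p : ℝ) : (2 : ℝ≥0∞) ^ (p - 1) ≠ ⊤ := by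
  simp [ENNReal.rpow_eq_top_iff]

lemma wCost_le [MetricSpace X] [MeasurableSpace X] {p : ℝ} (hp : 1 ≤ p)
    {μ ν : Measure X} (π : Measure (X × X)) [IsProbabilityMeasure π]
    (h1 : π.map Prod.fst = μ) (h2 : π.map Prod.snd = ν) :
    wCost p μ ν ≤ ∫⁻ z, edist z.1 z.2 ^ p ∂π := by
  unfold wCost
  simp_rw [cost_eq hp]
  exact iInf₂_le π ⟨inferInstance, h1, h2⟩

lemma le_wCost [MetricSpace X] [MeasurableSpace X] {p : ℝ} (hp : 1 ≤ p)
    {μ ν : Measure X} (c : ℝ≥0∞)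
    (h : ∀ π : Measure (X × X), IsProbabilityMeasure π → π.map Prod.fst = μ →
      π.map Prod.snd = ν → c ≤ ∫⁻ z, edist z.1 z.2 ^ p ∂π) :
    c ≤ wCost p μ ν := by
  unfold wCost
  simp_rw [cost_eq hp]
  exact le_iInf₂ fun π hπ => h π hπ.1 hπ.2.1 hπ.2.2

lemma mem_Pp [MetricSpace X] [MeasurableSpace X] {p : ℝ} (hp : 1 ≤ p) (x₀ : X) (μ : Measure X) :
    μ ∈ Pp p x₀ ↔ IsProbabilityMeasure μ ∧ ∫⁻ x, edist x₀ x ^ p ∂μ < ⊤ := by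
  unfold Pp FiniteMoment
  simp_rw [cost_eq hp]
  rfl

section
variable [MetricSpace X] [MeasurableSpace X] [BorelSpace X] [SecondCountableTopology X]

lemma wCost_lt_top {p : ℝ} (hp : 1 ≤ p) (x₀ : X) {μ ν : Measure X} (hμ : μ ∈ Pp p x₀)
    (hν : ν ∈ Pp p x₀) : wCost p μ ν < ⊤ := by
  rw [mem_Pp hp] at hμ hν
  have := hμ.1
  have := hν.1
  refine (wCost_le hp (μ.prod ν) (by simp) (by simp)).trans_lt ?_
  calc ∫⁻ z, edist z.1 z.2 ^ p ∂(μ.prod ν)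
      ≤ ∫⁻ z, 2 ^ (p - 1) * (edist x₀ z.1 ^ p + edist x₀ z.2 ^ p) ∂(μ.prod ν) := by
        refine lintegral_mono fun z => ?_
        have := edist_tri hp z.1 z.2 x₀
        rwa [edist_comm z.1 x₀] at this
    _ = 2 ^ (p - 1) * (∫⁻ x, edist x₀ x ^ p ∂μ + ∫⁻ x, edist x₀ x ^ p ∂ν) := by
        rw [lintegral_const_mul _ (by fun_prop), lintegral_add_left (by fun_prop)]
        congr 2
        · rw [lintegral_prod _ (by fun_prop)]; simp
        · rw [lintegral_prod _ (by fun_prop)]; simp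
    _ < ⊤ := ENNReal.mul_lt_top (two_ne_top p).lt_top (ENNReal.add_lt_top.2 ⟨hμ.2, hν.2⟩)

/-- weak convergence against bounded continuous `ℝ≥0∞`-valued functions -/
def WT (μs : ℕ → Measure X) (μ : Measure X) : Prop :=
  ∀ g : X → ℝ≥0∞, Continuous g → (∃ C : ℝ≥0, ∀ x, g x ≤ C) →
    Tendsto (fun n => ∫⁻ x, g x ∂(μs n)) atTop (𝓝 (∫⁻ x, g x ∂μ))

lemma tail_zero {μ : Measure X} {H : X → ℝ≥0∞} (hH : Continuous H) (hfin : ∫⁻ x, H x ∂μ < ⊤) :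
    Tendsto (fun k : ℕ => ∫⁻ x, (H x - k) ∂μ) atTop (𝓝 0) := by
  have hae : ∀ᵐ x ∂μ, H x < ⊤ := ae_lt_top hH.measurable hfin.ne
  have := tendsto_lintegral_of_dominated_convergence (μ := μ) (F := fun (k : ℕ) x => H x - k)
    (f := fun _ => 0) H (fun k => by fun_prop) (fun k => ae_of_all _ fun x => tsub_le_self) hfin.ne
    (by
      filter_upwards [hae] with x hx
      obtain ⟨m, hm⟩ := ENNReal.exists_nat_gt hx.ne
      refine tendsto_const_nhds.congr' ?_
      filter_upwards [eventually_ge_atTop m] with k hk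
      symm
      exact tsub_eq_zero_of_le (hm.le.trans (by exact_mod_cast hk)))
  simpa using this

lemma tail_lim {μs : ℕ → Measure X} {μ : Measure X} (hw : WT μs μ)
    [∀ n, IsProbabilityMeasure (μs n)] [IsProbabilityMeasure μ]
    {H : X → ℝ≥0∞} (hH : Continuous H)
    (hfin : ∫⁻ x, H x ∂μ < ⊤) (hlim : Tendsto (fun n => ∫⁻ x, H x ∂(μs n)) atTop
      (𝓝 (∫⁻ x, H x ∂μ))) (k : ℕ) :
    Tendsto (fun n => ∫⁻ x, (H x - k) ∂(μs n)) atTop (𝓝 (∫⁻ x, (H x - k) ∂μ)) := by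
  have key : ∀ ν : Measure X, IsProbabilityMeasure ν →
      ∫⁻ x, (H x - k) ∂ν = ∫⁻ x, H x ∂ν - ∫⁻ x, min (H x) k ∂ν := by
    intro ν hν
    rw [← lintegral_sub (by fun_prop)]
    · refine lintegral_congr fun x => ?_
      rcases le_total (H x) k with h | h
      · rw [min_eq_left h, tsub_eq_zero_of_le h, tsub_self]
      · simp [h]
    · refine ((lintegral_mono (g := fun _ => (k : ℝ≥0∞)) fun x => min_le_right _ _).trans_lt ?_).ne
      simp
    · exact ae_of_all _ fun x => min_le_left _ _
  simp_rw [fun n => key (μs n) inferInstance, key μ inferInstance]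
  refine ENNReal.Tendsto.sub hlim (hw _ (by fun_prop) ⟨k, fun x => ?_⟩) (Or.inl hfin.ne)
  simp

lemma dominated {μs : ℕ → Measure X} {μ : Measure X} (hw : WT μs μ)
    [∀ n, IsProbabilityMeasure (μs n)] [IsProbabilityMeasure μ]
    {G H : X → ℝ≥0∞} (hG : Continuous G) (hH : Continuous H) (hGH : ∀ x, G x ≤ H x)
    (hfin : ∫⁻ x, H x ∂μ < ⊤) (hlim : Tendsto (fun n => ∫⁻ x, H x ∂(μs n)) atTop
      (𝓝 (∫⁻ x, H x ∂μ))) :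
    Tendsto (fun n => ∫⁻ x, G x ∂(μs n)) atTop (𝓝 (∫⁻ x, G x ∂μ)) := by
  have hmin : ∀ k : ℕ, Tendsto (fun n => ∫⁻ x, min (G x) k ∂(μs n)) atTop
      (𝓝 (∫⁻ x, min (G x) k ∂μ)) := fun k =>
    hw _ (by fun_prop) ⟨k, fun x => by simp⟩
  have hGfin : ∫⁻ x, G x ∂μ < ⊤ := (lintegral_mono hGH).trans_lt hfin
  have hle : ∀ (k : ℕ) (ν : Measure X), ∫⁻ x, G x ∂ν ≤
      ∫⁻ x, min (G x) k ∂ν + ∫⁻ x, (H x - k) ∂ν := by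
    intro k ν
    rw [← lintegral_add_left (by fun_prop)]
    refine lintegral_mono fun x => ?_
    rcases le_total (G x) k with h | h
    · simp [h]
    · rw [min_eq_right h]
      exact (hGH x).trans le_add_tsub
  refine tendsto_of_le_liminf_of_limsup_le ?_ ?_
  · refine le_of_tendsto_of_tendsto' (f := fun k : ℕ => ∫⁻ x, G x ∂μ)
      (g := fun k : ℕ => liminf (fun n => ∫⁻ x, G x ∂(μs n)) atTop + ∫⁻ x, (H x - k) ∂μ)
      (b := atTop) tendsto_const_nhds
      (by simpa using tendsto_const_nhds.add (tail_zero hH hfin)) fun k => ?_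
    refine (hle k μ).trans ?_
    gcongr
    rw [← (hmin k).liminf_eq]
    exact liminf_le_liminf (Eventually.of_forall fun n => lintegral_mono fun x => min_le_left _ _)
  · refine ge_of_tendsto'
      (f := fun k : ℕ => ∫⁻ x, G x ∂μ + ∫⁻ x, (H x - k) ∂μ)
      (x := atTop) (by simpa using tendsto_const_nhds.add (tail_zero hH hfin)) fun k => ?_
    have h1 := (hmin k).add (tail_lim hw hH hfin hlim k)
    calc _ ≤ _ := limsup_le_limsup (Eventually.of_forall fun n => hle k (μs n))
      _ = _ := h1.limsup_eq
      _ ≤ _ := by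
        gcongr
        exact min_le_left _ _

lemma moment_le {p : ℝ} (hp : 1 ≤ p) (x₀ : X) (π : Measure (X × X)) (a b : X × X → X)
    (ha : Measurable a)
    (hab : ∀ z, edist (a z) (b z) = edist z.1 z.2) :
    (∫⁻ z, edist x₀ (b z) ^ p ∂π) ^ (1 / p) ≤
      (∫⁻ z, edist x₀ (a z) ^ p ∂π) ^ (1 / p) + (∫⁻ z, edist z.1 z.2 ^ p ∂π) ^ (1 / p) := by
  have h0 : 0 ≤ p := by linarith
  refine le_trans ?_ (ENNReal.lintegral_Lp_add_le (μ := π) (f := fun z => edist x₀ (a z))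
    (g := fun z => edist z.1 z.2) (by fun_prop) (by fun_prop) hp)
  refine ENNReal.rpow_le_rpow (lintegral_mono fun z => ENNReal.rpow_le_rpow ?_ h0) (by positivity)
  simp only [Pi.add_apply, ← hab]
  exact edist_triangle _ _ _

lemma le_of_coupling {p : ℝ} (hp : 1 ≤ p) {μ ν : Measure X} (c d L : ℝ≥0∞)
    (hL : L ≠ ⊤) (hL0 : L ≠ 0)
    (h : ∀ π : Measure (X × X), IsProbabilityMeasure π → π.map Prod.fst = μ →
      π.map Prod.snd = ν → c ≤ d + L * (∫⁻ z, edist z.1 z.2 ^ p ∂π) ^ (1 / p)) :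
    c ≤ d + L * (wCost p μ ν) ^ (1 / p) := by
  have hp0 : 0 < p := by linarith
  have key : ∀ y : ℝ≥0∞, c ≤ d + L * y ^ (1 / p) ↔ ((c - d) / L) ^ p ≤ y := by
    intro y
    rw [← tsub_le_iff_left, ← ENNReal.div_le_iff' hL0 hL, one_div, ENNReal.le_rpow_inv_iff hp0]
  rw [key]
  exact le_wCost hp _ fun π h1 h2 h3 => (key _).1 (h π h1 h2 h3)

lemma W_tendsto {p : ℝ} (hp : 1 ≤ p) (x₀ : X) {μs : ℕ → Measure X} {μ : Measure X}
    (hs : ∀ n, μs n ∈ Pp p x₀) (hμ : μ ∈ Pp p x₀) (h : WpTendsto p μs μ) :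
    Tendsto (fun n => (wCost p (μs n) μ) ^ (1 / p)) atTop (𝓝 0) := by
  have hfin : ∀ n, (wCost p (μs n) μ) ^ (1 / p) ≠ ⊤ := fun n =>
    ENNReal.rpow_ne_top_of_nonneg (by positivity) (wCost_lt_top hp x₀ (hs n) hμ).ne
  rw [← ENNReal.tendsto_toReal_iff hfin (by simp)]
  simpa [WpTendsto, Wp] using h

lemma moment_tendsto {p : ℝ} (hp : 1 ≤ p) (x₀ : X) {μs : ℕ → Measure X} {μ : Measure X}
    (hs : ∀ n, μs n ∈ Pp p x₀) (hμ : μ ∈ Pp p x₀) (h : WpTendsto p μs μ) :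
    Tendsto (fun n => ∫⁻ x, edist x₀ x ^ p ∂(μs n)) atTop (𝓝 (∫⁻ x, edist x₀ x ^ p ∂μ)) := by
  have hp0 : 0 < p := by linarith
  have hW := W_tendsto hp x₀ hs hμ h
  have hm : Measurable fun x : X => edist x₀ x ^ p := by fun_prop
  have e1 : ∀ n, (∫⁻ x, edist x₀ x ^ p ∂(μs n)) ^ (1 / p) ≤
      (∫⁻ x, edist x₀ x ^ p ∂μ) ^ (1 / p) + (wCost p (μs n) μ) ^ (1 / p) := by
    intro n
    have := le_of_coupling hp (μ := μs n) (ν := μ) ((∫⁻ x, edist x₀ x ^ p ∂(μs n)) ^ (1 / p))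
      ((∫⁻ x, edist x₀ x ^ p ∂μ) ^ (1 / p)) 1 (by simp) (by simp) (fun π _ h1 h2 => by
        rw [← h1, ← h2, lintegral_map hm measurable_fst, lintegral_map hm measurable_snd, one_mul]
        exact moment_le hp x₀ π Prod.snd Prod.fst measurable_snd fun z => edist_comm _ _)
    simpa using this
  have e2 : ∀ n, (∫⁻ x, edist x₀ x ^ p ∂μ) ^ (1 / p) ≤
      (∫⁻ x, edist x₀ x ^ p ∂(μs n)) ^ (1 / p) + (wCost p (μs n) μ) ^ (1 / p) := by
    intro n
    have := le_of_coupling hp (μ := μs n) (ν := μ) ((∫⁻ x, edist x₀ x ^ p ∂μ) ^ (1 / p))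
      ((∫⁻ x, edist x₀ x ^ p ∂(μs n)) ^ (1 / p)) 1 (by simp) (by simp) (fun π _ h1 h2 => by
        rw [← h1, ← h2, lintegral_map hm measurable_fst, lintegral_map hm measurable_snd, one_mul]
        exact moment_le hp x₀ π Prod.fst Prod.snd measurable_fst fun z => rfl)
    simpa using this
  have hA : (∫⁻ x, edist x₀ x ^ p ∂μ) ^ (1 / p) ≠ ⊤ :=
    ENNReal.rpow_ne_top_of_nonneg (by positivity) ((mem_Pp hp x₀ μ).1 hμ).2.ne
  have hl : Tendsto (fun n => (∫⁻ x, edist x₀ x ^ p ∂(μs n)) ^ (1 / p)) atTop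
      (𝓝 ((∫⁻ x, edist x₀ x ^ p ∂μ) ^ (1 / p))) := by
    refine tendsto_of_tendsto_of_tendsto_of_le_of_le
      (g := fun n => (∫⁻ x, edist x₀ x ^ p ∂μ) ^ (1 / p) - (wCost p (μs n) μ) ^ (1 / p))
      (h := fun n => (∫⁻ x, edist x₀ x ^ p ∂μ) ^ (1 / p) + (wCost p (μs n) μ) ^ (1 / p)) ?_ ?_
      (fun n => tsub_le_iff_right.2 (e2 n)) e1
    · simpa using ENNReal.Tendsto.sub (tendsto_const_nhds
        (x := (∫⁻ x, edist x₀ x ^ p ∂μ) ^ (1 / p))) hW (Or.inl hA)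
    · simpa using tendsto_const_nhds.add hW
  have := hl.ennrpow_const p
  simpa [← ENNReal.rpow_mul, hp0.ne'] using this

lemma WT_of_prob {μs : ℕ → ProbabilityMeasure X} {μ : ProbabilityMeasure X}
    (h : Tendsto μs atTop (𝓝 μ)) : WT (fun n => (μs n : Measure X)) (μ : Measure X) := by
  intro g hg ⟨C, hC⟩
  have hne : ∀ x, g x ≠ ⊤ := fun x => ((hC x).trans_lt ENNReal.coe_lt_top).ne
  have hc : Continuous fun x => (g x).toNNReal :=
    ENNReal.continuousOn_toNNReal.comp_continuous hg hne
  have := (ProbabilityMeasure.tendsto_iff_forall_lintegral_tendsto.1 h)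
    (BoundedContinuousFunction.mkOfBound ⟨fun x => (g x).toNNReal, hc⟩ (C : ℝ) (fun x y => by
      have hx : (g x).toNNReal ≤ C := by
        simpa using ENNReal.toNNReal_mono ENNReal.coe_ne_top (hC x)
      have hy : (g y).toNNReal ≤ C := by
        simpa using ENNReal.toNNReal_mono ENNReal.coe_ne_top (hC y)
      rw [NNReal.dist_eq]
      have hx' : ((g x).toNNReal : ℝ) ≤ C := by exact_mod_cast hx
      have hy' : ((g y).toNNReal : ℝ) ≤ C := by exact_mod_cast hy
      have := (g x).toNNReal.coe_nonneg
      have := (g y).toNNReal.coe_nonneg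
      simp only [ContinuousMap.coe_mk]
      rw [abs_le]
      constructor <;> linarith))
  simpa [ENNReal.coe_toNNReal (hne _)] using this

lemma weak_of_Wp {p : ℝ} (hp : 1 ≤ p) (x₀ : X) {μs : ℕ → Measure X} {μ : Measure X}
    (hs : ∀ n, μs n ∈ Pp p x₀) (hμ : μ ∈ Pp p x₀) (h : WpTendsto p μs μ) : WT μs μ := by
  have hp0 : 0 < p := by linarith
  have hW := W_tendsto hp x₀ hs hμ h
  have i1 : ∀ n, IsProbabilityMeasure (μs n) := fun n => (hs n).1
  have i2 : IsProbabilityMeasure μ := hμ.1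
  refine WT_of_prob (μs := fun n => ⟨μs n, i1 n⟩) (μ := ⟨μ, i2⟩) ?_
  refine tendsto_iff_forall_lipschitz_integral_tendsto.mpr ?_
  rintro g ⟨C, hC⟩ ⟨L, hL⟩
  have hgb : ∃ B, ∀ x, ‖g x‖ ≤ B := ⟨‖g x₀‖ + C, fun x => by
    have := hC x x₀
    rw [dist_eq_norm] at this
    calc ‖g x‖ = ‖g x₀ + (g x - g x₀)‖ := by ring_nf
      _ ≤ _ := norm_add_le _ _
      _ ≤ _ := by gcongr⟩
  obtain ⟨B, hB⟩ := hgb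
  have hgm : Measurable g := hL.continuous.measurable
  rw [tendsto_iff_edist_tendsto_0]
  have hbound : ∀ n, edist (∫ x, g x ∂(μs n)) (∫ x, g x ∂μ) ≤
      ((L + 1 : ℝ≥0) : ℝ≥0∞) * (wCost p (μs n) μ) ^ (1 / p) := by
    intro n
    have := le_of_coupling hp (μ := μs n) (ν := μ) (edist (∫ x, g x ∂(μs n)) (∫ x, g x ∂μ)) 0
      ((L + 1 : ℝ≥0) : ℝ≥0∞) (by simp) (by simp) (fun π _ h1 h2 => by
        have j1 : Integrable (fun z : X × X => g z.1) π :=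
          Integrable.of_bound (hgm.comp measurable_fst).aestronglyMeasurable B
            (ae_of_all _ fun z => hB _)
        have j2 : Integrable (fun z : X × X => g z.2) π :=
          Integrable.of_bound (hgm.comp measurable_snd).aestronglyMeasurable B
            (ae_of_all _ fun z => hB _)
        rw [← h1, ← h2, integral_map measurable_fst.aemeasurable hgm.aestronglyMeasurable,
          integral_map measurable_snd.aemeasurable hgm.aestronglyMeasurable,
          edist_eq_enorm_sub, ← integral_sub j1 j2, zero_add]
        calc _ ≤ _ := enorm_integral_le_lintegral_enorm _
          _ ≤ ∫⁻ z, ((L + 1 : ℝ≥0) : ℝ≥0∞) * edist z.1 z.2 ∂π := by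
            refine lintegral_mono fun z => ?_
            rw [← edist_eq_enorm_sub]
            refine (hL z.1 z.2).trans ?_
            gcongr
            simp
          _ = ((L + 1 : ℝ≥0) : ℝ≥0∞) * ∫⁻ z, edist z.1 z.2 ∂π := by
            rw [lintegral_const_mul _ (by fun_prop)]
          _ ≤ _ := by
            gcongr
            have := eLpNorm'_le_eLpNorm'_of_exponent_le (μ := π) (ε := ℝ≥0∞) one_pos hp
              (f := fun z : X × X => edist z.1 z.2)
              (by exact (by fun_prop : Measurable _).aestronglyMeasurable)
            simpa [eLpNorm'] using this)
    simpa using this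
  refine tendsto_of_tendsto_of_tendsto_of_le_of_le tendsto_const_nhds ?_ (fun n => zero_le) hbound
  have hc := ENNReal.Tendsto.const_mul (a := ((L + 1 : ℝ≥0) : ℝ≥0∞)) hW
    (Or.inr ENNReal.coe_ne_top)
  rwa [mul_zero] at hc

lemma sum_coef (a b : ℝ≥0∞) (ha : a ≠ ⊤) (hb : b ≠ ⊤) :
    min a b / (a * b) * b = min a b / a ∧ min a b / (a * b) * a = min a b / b ∧
    min a b / a * a = min a b ∧ min a b / b * b = min a b ∧ min a b / a ≤ 1 ∧ min a b / b ≤ 1 := by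
  rcases eq_or_ne a 0 with rfl | ha0
  · simp
  rcases eq_or_ne b 0 with rfl | hb0
  · simp
  refine ⟨?_, ?_, ENNReal.div_mul_cancel ha0 ha, ENNReal.div_mul_cancel hb0 hb,
    ENNReal.div_le_of_le_mul (by simp), ENNReal.div_le_of_le_mul (by simp)⟩
  · rw [div_eq_mul_inv, ENNReal.mul_inv (Or.inl ha0) (Or.inl ha), mul_assoc, mul_assoc,
      ENNReal.inv_mul_cancel hb0 hb, mul_one, div_eq_mul_inv]
  · rw [div_eq_mul_inv, ENNReal.mul_inv (Or.inl ha0) (Or.inl ha), mul_comm a⁻¹, mul_assoc,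
      mul_assoc, ENNReal.inv_mul_cancel ha0 ha, mul_one, div_eq_mul_inv]

/-- The residual measure of `α` after removing `w i • φ i`. -/
def resid (α : Measure X) (φ : ℕ → X → ℝ≥0∞) (w : ℕ → ℝ≥0∞) (k : ℕ) : Measure X :=
  α.withDensity (fun x => 1 - ∑ i ∈ Finset.range k, w i * φ i x)

lemma resid_add (α : Measure X) (φ : ℕ → X → ℝ≥0∞) (hφ : ∀ i, Measurable (φ i)) (w : ℕ → ℝ≥0∞)
    (hw : ∀ i, w i ≤ 1) (k : ℕ) (hsum : ∀ x, ∑ i ∈ Finset.range k, φ i x ≤ 1) :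
    ∑ i ∈ Finset.range k, w i • α.withDensity (φ i) + resid α φ w k = α := by
  ext s hs
  rw [Measure.add_apply, Measure.finsetSum_apply, resid, withDensity_apply _ hs]
  simp_rw [Measure.smul_apply, smul_eq_mul, withDensity_apply _ hs]
  simp_rw [← fun i => lintegral_const_mul (μ := α.restrict s) (w i) (hφ i)]
  rw [← lintegral_finsetSum _ (fun i _ => (hφ i).const_mul _), ← lintegral_add_left
    (Finset.measurable_sum _ fun i _ => (hφ i).const_mul _)]
  have : ∀ x, ∑ i ∈ Finset.range k, w i * φ i x + (1 - ∑ i ∈ Finset.range k, w i * φ i x) = 1 := by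
    intro x
    refine add_tsub_cancel_of_le (le_trans (Finset.sum_le_sum fun i _ => ?_) (hsum x))
    exact mul_le_of_le_one_left' (hw i)
  simp [this]

lemma resid_univ (α : Measure X) [IsProbabilityMeasure α] (φ : ℕ → X → ℝ≥0∞)
    (hφ : ∀ i, Measurable (φ i)) (w : ℕ → ℝ≥0∞)
    (hw : ∀ i, w i ≤ 1) (k : ℕ) (hsum : ∀ x, ∑ i ∈ Finset.range k, φ i x ≤ 1) :
    ∑ i ∈ Finset.range k, w i * ∫⁻ x, φ i x ∂α + resid α φ w k univ = 1 := by
  have := congrArg (fun m : Measure X => m univ) (resid_add α φ hφ w hw k hsum)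
  simpa [Measure.finsetSum_apply, withDensity_apply] using this

lemma resid_le (α : Measure X) (φ : ℕ → X → ℝ≥0∞) (w : ℕ → ℝ≥0∞) (k : ℕ) :
    resid α φ w k ≤ α := by
  unfold resid
  calc _ ≤ α.withDensity (fun _ => 1) := withDensity_mono (ae_of_all _ fun x => tsub_le_self)
    _ = α := withDensity_one

lemma coupling_bound {p : ℝ} (hp : 1 ≤ p) (x₀ : X) (α β : Measure X) [IsProbabilityMeasure α]
    [IsProbabilityMeasure β] (φ : ℕ → X → ℝ≥0∞) (hφ : ∀ i, Measurable (φ i)) (k S : ℕ)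
    (hsum : ∀ x, ∑ i ∈ Finset.range k, φ i x ≤ 1) (η : ℝ≥0∞)
    (hη : ∀ i x y, φ i x ≠ 0 → φ i y ≠ 0 → edist x y ≤ η) :
    wCost p α β ≤ η ^ p + 2 ^ (p - 1) *
      ((S * (1 - ∑ i ∈ Finset.range k, min (∫⁻ x, φ i x ∂α) (∫⁻ x, φ i x ∂β)) +
          ∫⁻ x, (edist x₀ x ^ p - S) ∂α) +
       (S * (1 - ∑ i ∈ Finset.range k, min (∫⁻ x, φ i x ∂α) (∫⁻ x, φ i x ∂β)) +
          ∫⁻ x, (edist x₀ x ^ p - S) ∂β)) := by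
  have hp0 : 0 < p := by linarith
  classical
  -- we may cut off the functions beyond `k`
  have hle1 : ∀ i ∈ Finset.range k, ∀ x, φ i x ≤ 1 := fun i hi x =>
    (Finset.single_le_sum (f := fun i => φ i x) (fun _ _ => zero_le) hi).trans (hsum x)
  wlog hall : ∀ i x, φ i x ≤ 1 generalizing φ
  · have := this (fun i x => if i < k then φ i x else 0)
      (fun i => by by_cases h : i < k <;> simp [h, hφ i])
      (fun x => by
        refine le_trans (le_of_eq (Finset.sum_congr rfl fun i hi => ?_)) (hsum x)
        simp [Finset.mem_range.1 hi])
      (fun i x y h1 h2 => by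
        by_cases h : i < k
        · simp only [h, if_true] at h1 h2; exact hη i x y h1 h2
        · simp [h] at h1)
      (fun i hi x => by simpa [Finset.mem_range.1 hi] using hle1 i hi x)
      (fun i x => by
        by_cases h : i < k
        · simpa [h] using hle1 i (Finset.mem_range.2 h) x
        · simp [h])
    have e : ∑ i ∈ Finset.range k, min (∫⁻ x, (if i < k then φ i x else 0) ∂α)
        (∫⁻ x, (if i < k then φ i x else 0) ∂β) =
        ∑ i ∈ Finset.range k, min (∫⁻ x, φ i x ∂α) (∫⁻ x, φ i x ∂β) :=
      Finset.sum_congr rfl fun i hi => by simp [Finset.mem_range.1 hi]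
    rwa [e] at this
  set a : ℕ → ℝ≥0∞ := fun i => ∫⁻ x, φ i x ∂α with ha
  set b : ℕ → ℝ≥0∞ := fun i => ∫⁻ x, φ i x ∂β with hb
  have hafin : ∀ i, a i ≠ ⊤ := fun i =>
    ((lintegral_mono (hall i)).trans_lt (by simp)).ne
  have hbfin : ∀ i, b i ≠ ⊤ := fun i =>
    ((lintegral_mono (hall i)).trans_lt (by simp)).ne
  set m : ℕ → ℝ≥0∞ := fun i => min (a i) (b i) with hm
  set r : ℝ≥0∞ := 1 - ∑ i ∈ Finset.range k, m i with hr
  have hc := fun i => sum_coef (a i) (b i) (hafin i) (hbfin i)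
  set u : ℕ → ℝ≥0∞ := fun i => m i / a i with hu
  set v : ℕ → ℝ≥0∞ := fun i => m i / b i with hv
  have hu1 : ∀ i, u i ≤ 1 := fun i => (hc i).2.2.2.2.1
  have hv1 : ∀ i, v i ≤ 1 := fun i => (hc i).2.2.2.2.2
  set α' := resid α φ u k with hα'
  set β' := resid β φ v k with hβ'
  have iα : IsFiniteMeasure α' := isFiniteMeasure_of_le α (resid_le α φ u k)
  have iβ : IsFiniteMeasure β' := isFiniteMeasure_of_le β (resid_le β φ v k)
  have hsa := resid_univ α φ hφ u hu1 k hsum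
  have hsb := resid_univ β φ hφ v hv1 k hsum
  have hsa' : ∑ i ∈ Finset.range k, m i + α' univ = 1 := by
    rw [← hsa]; congr 1; exact Finset.sum_congr rfl fun i _ => (hc i).2.2.1.symm
  have hsb' : ∑ i ∈ Finset.range k, m i + β' univ = 1 := by
    rw [← hsb]; congr 1; exact Finset.sum_congr rfl fun i _ => (hc i).2.2.2.1.symm
  have hmle : ∑ i ∈ Finset.range k, m i ≤ 1 := hsa' ▸ le_self_add
  have hmfin : ∑ i ∈ Finset.range k, m i ≠ ⊤ := (hmle.trans_lt ENNReal.one_lt_top).ne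
  have hra : α' univ = r := ENNReal.eq_sub_of_add_eq hmfin (by rw [add_comm]; exact hsa')
  have hrb : β' univ = r := ENNReal.eq_sub_of_add_eq hmfin (by rw [add_comm]; exact hsb')
  have hrfin : r ≠ ⊤ := hra ▸ measure_ne_top _ _
  have iφα : ∀ i, IsFiniteMeasure (α.withDensity (φ i)) := fun i =>
    isFiniteMeasure_withDensity (hafin i)
  have iφβ : ∀ i, IsFiniteMeasure (β.withDensity (φ i)) := fun i =>
    isFiniteMeasure_withDensity (hbfin i)
  have uα : ∀ i, α.withDensity (φ i) univ = a i := fun i => by simp [withDensity_apply, ha]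
  have uβ : ∀ i, β.withDensity (φ i) univ = b i := fun i => by simp [withDensity_apply, hb]
  let π : Measure (X × X) :=
    ∑ i ∈ Finset.range k, (m i / (a i * b i)) • (α.withDensity (φ i)).prod (β.withDensity (φ i)) +
      r⁻¹ • α'.prod β'
  have hr0 : r = 0 → α' = 0 ∧ β' = 0 := fun h =>
    ⟨Measure.measure_univ_eq_zero.1 (hra.trans h), Measure.measure_univ_eq_zero.1 (hrb.trans h)⟩
  have rr : ∀ s, r⁻¹ * (α' s * r) = α' s := by
    intro s
    rcases eq_or_ne r 0 with h | h
    · simp [(hr0 h).1]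
    · rw [mul_comm, mul_assoc, ENNReal.mul_inv_cancel h hrfin, mul_one]
  have rr' : ∀ s, r⁻¹ * (r * β' s) = β' s := by
    intro s
    rcases eq_or_ne r 0 with h | h
    · simp [(hr0 h).2]
    · rw [← mul_assoc, ENNReal.inv_mul_cancel h hrfin, one_mul]
  have h1 : π.map Prod.fst = α := by
    refine Eq.trans ?_ (resid_add α φ hφ u hu1 k hsum)
    ext s hs
    rw [Measure.map_apply measurable_fst hs, ← Set.prod_univ]
    simp only [π, Measure.add_apply, Measure.finsetSum_apply, Measure.smul_apply, smul_eq_mul,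
      Measure.prod_prod, uβ, hrb, rr]
    congr 1
    refine Finset.sum_congr rfl fun i _ => ?_
    rw [mul_comm (α.withDensity (φ i) s) (b i), ← mul_assoc, (hc i).1]
  have h2 : π.map Prod.snd = β := by
    refine Eq.trans ?_ (resid_add β φ hφ v hv1 k hsum)
    ext s hs
    rw [Measure.map_apply measurable_snd hs, ← Set.univ_prod]
    simp only [π, Measure.add_apply, Measure.finsetSum_apply, Measure.smul_apply, smul_eq_mul,
      Measure.prod_prod, uα, hra, rr']
    congr 1
    refine Finset.sum_congr rfl fun i _ => ?_
    rw [← mul_assoc, (hc i).2.1]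
  have iπ : IsProbabilityMeasure π := by
    constructor
    have : π.map Prod.fst univ = 1 := by rw [h1]; simp
    rwa [Measure.map_apply measurable_fst MeasurableSet.univ, preimage_univ] at this
  refine (wCost_le hp π h1 h2).trans ?_
  simp only [π]
  rw [lintegral_add_measure, lintegral_finsetSum_measure]
  simp_rw [lintegral_smul_measure, smul_eq_mul]
  gcongr ?_ + ?_
  · calc _ ≤ ∑ i ∈ Finset.range k, m i / (a i * b i) * (η ^ p * (a i * b i)) := by
          refine Finset.sum_le_sum fun i _ => ?_
          gcongr
          rw [prod_withDensity (hφ i) (hφ i), lintegral_withDensity_eq_lintegral_mul _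
            (by fun_prop) (by fun_prop)]
          calc _ ≤ ∫⁻ z, η ^ p * (φ i z.1 * φ i z.2) ∂(α.prod β) := by
                refine lintegral_mono fun z => ?_
                simp only [Pi.mul_apply]
                by_cases hz : φ i z.1 * φ i z.2 = 0
                · simp [hz]
                · rw [mul_comm]
                  gcongr
                  exact hη i _ _ (left_ne_zero_of_mul hz) (right_ne_zero_of_mul hz)
            _ = _ := by
                rw [lintegral_const_mul _ (by fun_prop), lintegral_prod_mul
                  (hφ i).aemeasurable (hφ i).aemeasurable]
      _ = ∑ i ∈ Finset.range k, η ^ p * m i := by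
          refine Finset.sum_congr rfl fun i _ => ?_
          have e1 : m i / (a i * b i) * b i = m i / a i := (hc i).1
          have e2 : m i / a i * a i = m i := (hc i).2.2.1
          calc m i / (a i * b i) * (η ^ p * (a i * b i))
              = η ^ p * (m i / (a i * b i) * b i * a i) := by
                generalize m i / (a i * b i) = c
                ring
            _ = _ := by rw [e1, e2]
      _ = η ^ p * ∑ i ∈ Finset.range k, m i := by rw [Finset.mul_sum]
      _ ≤ η ^ p := mul_le_of_le_one_right' hmle
  · have hh : ∀ (γ γ' : Measure X), γ' ≤ γ → γ' univ = r →
        ∫⁻ x, edist x₀ x ^ p ∂γ' ≤ S * r + ∫⁻ x, (edist x₀ x ^ p - S) ∂γ := by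
      intro γ γ' hγ hu
      calc _ ≤ ∫⁻ x, ((S : ℝ≥0∞) + (edist x₀ x ^ p - S)) ∂γ' :=
            lintegral_mono fun x => le_add_tsub
        _ = S * r + ∫⁻ x, (edist x₀ x ^ p - S) ∂γ' := by
            rw [lintegral_add_left measurable_const, lintegral_const, hu]
        _ ≤ _ := by gcongr
    calc _ ≤ r⁻¹ * ∫⁻ z, 2 ^ (p - 1) * (edist x₀ z.1 ^ p + edist x₀ z.2 ^ p) ∂(α'.prod β') := by
          gcongr with z
          have := edist_tri hp z.1 z.2 x₀
          rwa [edist_comm z.1 x₀] at this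
      _ = r⁻¹ * (2 ^ (p - 1) * (r * ∫⁻ x, edist x₀ x ^ p ∂α' + r * ∫⁻ x, edist x₀ x ^ p ∂β')) := by
          rw [lintegral_const_mul _ (by fun_prop), lintegral_add_left (by fun_prop)]
          congr 3
          · rw [lintegral_prod _ (by fun_prop)]
            simp only [lintegral_const, hrb]
            rw [lintegral_mul_const _ (by fun_prop), mul_comm]
          · rw [lintegral_prod _ (by fun_prop)]
            simp only [lintegral_const, hra]
            rw [mul_comm]
      _ = (r⁻¹ * r) * (2 ^ (p - 1) * (∫⁻ x, edist x₀ x ^ p ∂α' + ∫⁻ x, edist x₀ x ^ p ∂β')) := by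
          ring
      _ ≤ 2 ^ (p - 1) * (∫⁻ x, edist x₀ x ^ p ∂α' + ∫⁻ x, edist x₀ x ^ p ∂β') :=
          mul_le_of_le_one_left' (ENNReal.inv_mul_le_one r)
      _ ≤ _ := by
          gcongr
          · exact hh α α' (resid_le _ _ _ _) hra
          · exact hh β β' (resid_le _ _ _ _) hrb

/-- bump function around the `i`-th point of a dense sequence -/
def bump (xs : ℕ → X) (η : ℝ≥0∞) (i : ℕ) (x : X) : ℝ≥0∞ := 1 - edist x (xs i) / η

/-- running maximum of the bump functions -/
def bmax (xs : ℕ → X) (η : ℝ≥0∞) : ℕ → X → ℝ≥0∞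
  | 0 => fun _ => 0
  | k + 1 => fun x => max (bmax xs η k x) (bump xs η k x)

lemma bump_cont (xs : ℕ → X) {η : ℝ≥0∞} (h0 : η ≠ 0) (i : ℕ) : Continuous (bump xs η i) := by
  rw [continuous_iff_continuousAt]
  intro x
  refine ENNReal.Tendsto.sub tendsto_const_nhds ?_ (Or.inl ENNReal.one_ne_top)
  have : Continuous fun x => edist x (xs i) / η :=
    (ENNReal.continuous_div_const η h0).comp (by fun_prop)
  exact this.tendsto x

lemma bmax_cont (xs : ℕ → X) {η : ℝ≥0∞} (h0 : η ≠ 0) (k : ℕ) : Continuous (bmax xs η k) := by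
  induction k with
  | zero => exact continuous_const
  | succ k ih => exact ih.max (bump_cont xs h0 k)

lemma bmax_le (xs : ℕ → X) (η : ℝ≥0∞) (k : ℕ) (x : X) : bmax xs η k x ≤ 1 := by
  induction k with
  | zero => exact zero_le
  | succ k ih => exact max_le ih tsub_le_self

lemma bmax_mono (xs : ℕ → X) (η : ℝ≥0∞) (x : X) : Monotone fun k => bmax xs η k x :=
  monotone_nat_of_le_succ fun _ => le_max_left _ _

lemma bmax_tendsto (xs : ℕ → X) (hxs : DenseRange xs) {η : ℝ≥0∞} (h0 : η ≠ 0) (x : X) :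
    Tendsto (fun k => bmax xs η k x) atTop (𝓝 1) := by
  rw [tendsto_order]
  refine ⟨fun c hc => ?_, fun c hc => Eventually.of_forall fun k => (bmax_le xs η k x).trans_lt hc⟩
  have hcont : Continuous fun y => 1 - edist x y / η := by
    rw [continuous_iff_continuousAt]
    intro y
    refine ENNReal.Tendsto.sub tendsto_const_nhds ?_ (Or.inl ENNReal.one_ne_top)
    have : Continuous fun y => edist x y / η :=
      (ENNReal.continuous_div_const η h0).comp (by fun_prop)
    exact this.tendsto y
  obtain ⟨i, hi⟩ := hxs.exists_mem_open (isOpen_lt continuous_const hcont (f := fun _ => c))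
    ⟨x, by simpa using hc⟩
  filter_upwards [eventually_ge_atTop (i + 1)] with k hk
  exact lt_of_lt_of_le (lt_of_lt_of_le hi (le_max_right (bmax xs η i x) _))
    (bmax_mono xs η x hk)

/-- the partition functions -/
def part (xs : ℕ → X) (η : ℝ≥0∞) (i : ℕ) (x : X) : ℝ≥0∞ := bmax xs η (i + 1) x - bmax xs η i x

lemma part_cont (xs : ℕ → X) {η : ℝ≥0∞} (h0 : η ≠ 0) (i : ℕ) : Continuous (part xs η i) := by
  rw [continuous_iff_continuousAt]
  intro x
  exact ENNReal.Tendsto.sub ((bmax_cont xs h0 _).tendsto x) ((bmax_cont xs h0 _).tendsto x)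
    (Or.inl ((bmax_le xs η _ x).trans_lt ENNReal.one_lt_top).ne)

lemma part_sum (xs : ℕ → X) (η : ℝ≥0∞) (k : ℕ) (x : X) :
    ∑ i ∈ Finset.range k, part xs η i x = bmax xs η k x := by
  induction k with
  | zero => rfl
  | succ k ih =>
    rw [Finset.sum_range_succ, ih, part, add_tsub_cancel_of_le (bmax_mono xs η x (Nat.le_succ k))]

lemma part_ne (xs : ℕ → X) {η : ℝ≥0∞} (h0 : η ≠ 0) (ht : η ≠ ⊤) (i : ℕ) (x : X)
    (h : part xs η i x ≠ 0) : edist x (xs i) ≤ η := by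
  by_contra hc
  push Not at hc
  apply h
  have hb : bump xs η i x = 0 := by
    refine tsub_eq_zero_of_le ?_
    rw [ENNReal.le_div_iff_mul_le (Or.inl h0) (Or.inl ht), one_mul]
    exact hc.le
  simp [part, bmax, hb]

lemma wCost_tendsto {p : ℝ} (hp : 1 ≤ p) (x₀ : X) {νs : ℕ → Measure X} {ν : Measure X}
    [∀ n, IsProbabilityMeasure (νs n)] [IsProbabilityMeasure ν] (hw : WT νs ν)
    (hfin : ∫⁻ x, edist x₀ x ^ p ∂ν < ⊤)
    (hlim : Tendsto (fun n => ∫⁻ x, edist x₀ x ^ p ∂(νs n)) atTop (𝓝 (∫⁻ x, edist x₀ x ^ p ∂ν))) :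
    Tendsto (fun n => wCost p (νs n) ν) atTop (𝓝 0) := by
  have hp0 : 0 < p := by linarith
  have : Nonempty X := ⟨x₀⟩
  set xs := TopologicalSpace.denseSeq X
  have hxs : DenseRange xs := TopologicalSpace.denseRange_denseSeq X
  have hHc : Continuous fun x : X => edist x₀ x ^ p := by fun_prop
  have key : ∀ (j S k : ℕ), limsup (fun n => wCost p (νs n) ν) atTop ≤
      (2 * ((j : ℝ≥0∞) + 1)⁻¹) ^ p + 2 ^ (p - 1) *
      ((S * (1 - ∫⁻ x, bmax xs ((j : ℝ≥0∞) + 1)⁻¹ k x ∂ν) + ∫⁻ x, (edist x₀ x ^ p - S) ∂ν) +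
       (S * (1 - ∫⁻ x, bmax xs ((j : ℝ≥0∞) + 1)⁻¹ k x ∂ν) + ∫⁻ x, (edist x₀ x ^ p - S) ∂ν)) := by
    intro j S k
    set η : ℝ≥0∞ := ((j : ℝ≥0∞) + 1)⁻¹ with hη
    have h0 : η ≠ 0 := by simp [hη]
    have ht : η ≠ ⊤ := by simp [hη]
    have hb := fun n => coupling_bound hp x₀ (νs n) ν (part xs η)
      (fun i => (part_cont xs h0 i).measurable) k S
      (fun x => by rw [part_sum]; exact bmax_le xs η k x) (2 * η)
      (fun i x y h1 h2 => by
        rw [two_mul]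
        refine (edist_triangle x (xs i) y).trans (add_le_add (part_ne xs h0 ht i x h1) ?_)
        rw [edist_comm]
        exact part_ne xs h0 ht i y h2)
    refine (limsup_le_limsup (Eventually.of_forall hb)).trans (le_of_eq ?_)
    apply Tendsto.limsup_eq
    have hint : ∫⁻ x, bmax xs η k x ∂ν = ∑ i ∈ Finset.range k,
        min (∫⁻ x, part xs η i x ∂ν) (∫⁻ x, part xs η i x ∂ν) := by
      simp_rw [min_self]
      rw [← lintegral_finsetSum _ (fun i _ => (part_cont xs h0 i).measurable)]
      simp_rw [part_sum]
    rw [hint]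
    have hr : Tendsto (fun n => (S : ℝ≥0∞) * (1 - ∑ i ∈ Finset.range k,
        min (∫⁻ x, part xs η i x ∂(νs n)) (∫⁻ x, part xs η i x ∂ν))) atTop
        (𝓝 ((S : ℝ≥0∞) * (1 - ∑ i ∈ Finset.range k,
        min (∫⁻ x, part xs η i x ∂ν) (∫⁻ x, part xs η i x ∂ν)))) := by
      refine ENNReal.Tendsto.const_mul (ENNReal.Tendsto.sub tendsto_const_nhds
        (tendsto_finsetSum _ fun i _ => ?_) (Or.inl ENNReal.one_ne_top))
        (Or.inr (ENNReal.natCast_ne_top S))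
      refine Tendsto.min (hw _ (part_cont xs h0 i) ⟨1, fun x => ?_⟩) tendsto_const_nhds
      exact tsub_le_self.trans (bmax_le xs η _ x)
    exact tendsto_const_nhds.add (ENNReal.Tendsto.const_mul
      ((hr.add (tail_lim hw hHc hfin hlim S)).add (hr.add tendsto_const_nhds))
      (Or.inr (two_ne_top p)))
  have key2 : ∀ (j S : ℕ), limsup (fun n => wCost p (νs n) ν) atTop ≤
      (2 * ((j : ℝ≥0∞) + 1)⁻¹) ^ p + 2 ^ (p - 1) *
      (∫⁻ x, (edist x₀ x ^ p - S) ∂ν + ∫⁻ x, (edist x₀ x ^ p - S) ∂ν) := by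
    intro j S
    refine ge_of_tendsto' (x := atTop) ?_ (key j S)
    set η : ℝ≥0∞ := ((j : ℝ≥0∞) + 1)⁻¹ with hη
    have h0 : η ≠ 0 := by simp [hη]
    have h1 : Tendsto (fun k => ∫⁻ x, bmax xs η k x ∂ν) atTop (𝓝 1) := by
      have := lintegral_tendsto_of_tendsto_of_monotone (μ := ν) (f := fun k => bmax xs η k)
        (F := fun _ => 1) (fun k => (bmax_cont xs h0 k).measurable.aemeasurable)
        (ae_of_all _ fun x => bmax_mono xs η x) (ae_of_all _ fun x => bmax_tendsto xs hxs h0 x)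
      simpa using this
    have h2 : Tendsto (fun k => (S : ℝ≥0∞) * (1 - ∫⁻ x, bmax xs η k x ∂ν)) atTop (𝓝 0) := by
      have := ENNReal.Tendsto.const_mul (a := (S : ℝ≥0∞)) (ENNReal.Tendsto.sub
        (tendsto_const_nhds (x := (1 : ℝ≥0∞))) h1
        (Or.inl ENNReal.one_ne_top)) (Or.inr (ENNReal.natCast_ne_top S))
      simpa using this
    have h3 := h2.add_const (∫⁻ x, (edist x₀ x ^ p - S) ∂ν)
    rw [zero_add] at h3
    exact tendsto_const_nhds.add (ENNReal.Tendsto.const_mul (h3.add h3) (Or.inr (two_ne_top p)))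
  have key3 : ∀ (j : ℕ), limsup (fun n => wCost p (νs n) ν) atTop ≤
      (2 * ((j : ℝ≥0∞) + 1)⁻¹) ^ p := by
    intro j
    refine ge_of_tendsto' (x := atTop) ?_ (key2 j)
    have h3 := tail_zero hHc hfin
    have := tendsto_const_nhds (x := (2 * ((j : ℝ≥0∞) + 1)⁻¹) ^ p).add
      (ENNReal.Tendsto.const_mul (a := 2 ^ (p - 1)) (h3.add h3) (Or.inr (two_ne_top p)))
    simpa using this
  have key4 : limsup (fun n => wCost p (νs n) ν) atTop ≤ 0 := by
    refine ge_of_tendsto' (x := atTop) ?_ key3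
    have h1 : Tendsto (fun j : ℕ => ((j : ℝ≥0∞) + 1)⁻¹) atTop (𝓝 0) := by
      have := (tendsto_add_atTop_iff_nat 1).2 ENNReal.tendsto_inv_nat_nhds_zero
      simpa using this
    have h2 := (ENNReal.Tendsto.const_mul (a := 2) h1 (Or.inr ENNReal.ofNat_ne_top)).ennrpow_const p
    simpa [hp0] using h2
  exact tendsto_of_le_liminf_of_limsup_le zero_le key4

end

end MWAux

/-- A continuous Markov kernel `q : X → P_p(X)` with `sup_x w_p(q(x), δ_{f(x)}) = M < ∞`
induces an MW-map of order `p` relative to `f` with noise level `M`: the map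
`P(μ) = ∫ q(x) dμ(x)` maps `P_p(X)` into itself, is `w_p`-continuous, convex linear, and
satisfies `w_p(P(μ), f_*(μ)) ≤ M`. -/
theorem kernel_induces_MW_map_relative_to_f
    [MetricSpace X] [MeasurableSpace X] [BorelSpace X] [ProperSpace X] [CompleteSpace X]
    [TopologicalSpace.SeparableSpace X]
    (p : ℝ) (hp : 1 ≤ p) (x₀ : X) (f : X → X) (hf : Continuous f)
    (hmap : ∀ μ ∈ Pp p x₀, μ.map f ∈ Pp p x₀)
    (hcont : ∀ (μs : ℕ → Measure X) (μ : Measure X), (∀ n, μs n ∈ Pp p x₀) → μ ∈ Pp p x₀ →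
      WpTendsto p μs μ → WpTendsto p (fun n => (μs n).map f) (μ.map f))
    (q : ProbabilityTheory.Kernel X X) [ProbabilityTheory.IsMarkovKernel q]
    (hq_mem : ∀ x : X, (q x : Measure X) ∈ Pp p x₀)
    (hq_cont : ∀ (xs : ℕ → X) (x : X), Tendsto xs atTop (𝓝 x) →
      Tendsto (fun n => Wp p (q (xs n)) (q x)) atTop (𝓝 0))
    (M : ℝ) (hM : ∀ x : X, Wp p (q x) (Measure.dirac (f x)) ≤ M) :
    (∀ μ ∈ Pp p x₀, μ.bind (fun x => q x) ∈ Pp p x₀) ∧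
    (∀ (μs : ℕ → Measure X) (μ : Measure X), (∀ n, μs n ∈ Pp p x₀) → μ ∈ Pp p x₀ →
      WpTendsto p μs μ →
      WpTendsto p (fun n => (μs n).bind (fun x => q x)) (μ.bind (fun x => q x))) ∧
    (∀ t : ℝ, 0 ≤ t → t ≤ 1 → ∀ μ ∈ Pp p x₀, ∀ ν ∈ Pp p x₀,
      (mix t μ ν).bind (fun x => q x) = mix t (μ.bind (fun x => q x)) (ν.bind (fun x => q x))) ∧
    (∀ μ ∈ Pp p x₀, Wp p (μ.bind (fun x => q x)) (μ.map f) ≤ M) := by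
  have hp0 : 0 < p := by linarith
  have hM0 : 0 ≤ M := le_trans ENNReal.toReal_nonneg (hM x₀)
  have hiq : ∀ x, IsProbabilityMeasure (q x) := fun x => inferInstance
  -- the local cost
  have hloc : ∀ x, ∫⁻ y, edist y (f x) ^ p ∂(q x) ≤ ENNReal.ofReal M ^ p := by
    intro x
    have hd : Measure.dirac (f x) ∈ Pp p x₀ := by
      rw [MWAux.mem_Pp hp]
      refine ⟨inferInstance, ?_⟩
      rw [lintegral_dirac' _ (by fun_prop)]
      exact ENNReal.rpow_lt_top_of_nonneg hp0.le (edist_ne_top _ _)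
    have hfin := MWAux.wCost_lt_top hp x₀ (hq_mem x) hd
    have h1 : ∫⁻ y, edist y (f x) ^ p ∂(q x) ≤ wCost p (q x) (Measure.dirac (f x)) := by
      refine MWAux.le_wCost hp _ fun π _ h1 h2 => ?_
      rw [← h1, lintegral_map (by fun_prop) measurable_fst]
      have hae : ∀ᵐ z ∂π, z.2 = f x := by
        have : ∀ᵐ b ∂(π.map Prod.snd), b = f x := by
          rw [h2]
          exact (ae_dirac_iff (measurableSet_singleton (f x))).2 rfl
        exact ae_of_ae_map measurable_snd.aemeasurable this
      refine lintegral_mono_ae ?_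
      filter_upwards [hae] with z hz
      rw [hz]
    refine h1.trans ?_
    have h2 := hM x
    unfold Wp at h2
    have h3 : wCost p (q x) (Measure.dirac (f x)) ^ (1 / p) ≤ ENNReal.ofReal M := by
      rw [ENNReal.le_ofReal_iff_toReal_le ?_ hM0]
      · exact h2
      · exact ENNReal.rpow_ne_top_of_nonneg (by positivity) hfin.ne
    rw [one_div] at h3
    exact (ENNReal.rpow_inv_le_iff hp0).1 h3
  have hMtop : ENNReal.ofReal M ^ p ≠ ⊤ :=
    ENNReal.rpow_ne_top_of_nonneg hp0.le ENNReal.ofReal_ne_top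
  -- the dominating function
  set H : X → ℝ≥0∞ := fun x => 2 ^ (p - 1) * (edist x₀ (f x) ^ p + ENNReal.ofReal M ^ p) with hH
  have hHm : Measurable fun x : X => edist x₀ (f x) ^ p :=
    Measurable.pow_const (measurable_edist_right.comp hf.measurable) p
  have hmom : ∀ x, ∫⁻ y, edist x₀ y ^ p ∂(q x) ≤ H x := by
    intro x
    calc _ ≤ ∫⁻ y, 2 ^ (p - 1) * (edist x₀ (f x) ^ p + edist y (f x) ^ p) ∂(q x) := by
          refine lintegral_mono fun y => ?_
          have := MWAux.edist_tri hp x₀ y (f x)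
          rwa [edist_comm (f x) y] at this
      _ = 2 ^ (p - 1) * (edist x₀ (f x) ^ p + ∫⁻ y, edist y (f x) ^ p ∂(q x)) := by
          rw [lintegral_const_mul _ (by fun_prop), lintegral_add_left measurable_const]
          simp
      _ ≤ _ := by
          simp only [hH]
          gcongr
          exact hloc x
  have hHint : ∀ μ : Measure X, IsProbabilityMeasure μ → ∫⁻ x, H x ∂μ =
      2 ^ (p - 1) * (∫⁻ y, edist x₀ y ^ p ∂(μ.map f) + ENNReal.ofReal M ^ p) := by
    intro μ _
    simp only [hH]
    rw [lintegral_const_mul _ (hHm.add_const _), lintegral_add_left hHm,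
      lintegral_map (by fun_prop) hf.measurable]
    simp
  have hHfin : ∀ μ ∈ Pp p x₀, ∫⁻ x, H x ∂μ < ⊤ := by
    intro μ hμ
    rw [hHint μ hμ.1]
    exact ENNReal.mul_lt_top (MWAux.two_ne_top p).lt_top
      (ENNReal.add_lt_top.2 ⟨((MWAux.mem_Pp hp x₀ _).1 (hmap μ hμ)).2, hMtop.lt_top⟩)
  have hbind : ∀ (μ : Measure X) (g : X → ℝ≥0∞), Measurable g →
      ∫⁻ y, g y ∂(μ.bind (fun x => q x)) = ∫⁻ x, ∫⁻ y, g y ∂(q x) ∂μ := fun μ g hg =>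
    Measure.lintegral_bind q.measurable.aemeasurable hg.aemeasurable
  have hprob : ∀ μ : Measure X, IsProbabilityMeasure μ →
      IsProbabilityMeasure (μ.bind (fun x => q x)) := by
    intro μ _
    constructor
    have := hbind μ (fun _ => 1) measurable_const
    simpa using this
  have part1 : ∀ μ ∈ Pp p x₀, μ.bind (fun x => q x) ∈ Pp p x₀ := by
    intro μ hμ
    rw [MWAux.mem_Pp hp]
    refine ⟨hprob μ hμ.1, ?_⟩
    rw [hbind μ _ (by fun_prop)]
    exact (lintegral_mono hmom).trans_lt (hHfin μ hμ)
  refine ⟨part1, ?_, ?_, ?_⟩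
  · intro μs μ hs hμ hconv
    have i1 : ∀ n, IsProbabilityMeasure (μs n) := fun n => (hs n).1
    have i2 : IsProbabilityMeasure μ := hμ.1
    have j1 : ∀ n, IsProbabilityMeasure ((μs n).bind (fun x => q x)) := fun n => hprob _ (i1 n)
    have j2 : IsProbabilityMeasure (μ.bind (fun x => q x)) := hprob _ i2
    have hw := MWAux.weak_of_Wp hp x₀ hs hμ hconv
    have hqc : ∀ (xs : ℕ → X) (x : X), Tendsto xs atTop (𝓝 x) →
        WpTendsto p (fun n => q (xs n)) (q x) := hq_cont
    have hwq : MWAux.WT (fun n => (μs n).bind (fun x => q x)) (μ.bind (fun x => q x)) := by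
      intro g hg hC
      simp_rw [hbind _ g hg.measurable]
      obtain ⟨C, hC⟩ := hC
      refine hw (fun x => ∫⁻ y, g y ∂(q x)) ?_ ⟨C, fun x => ?_⟩
      · refine SeqContinuous.continuous fun xs x hx => ?_
        exact MWAux.weak_of_Wp hp x₀ (fun n => hq_mem (xs n)) (hq_mem x) (hqc xs x hx) g hg ⟨C, hC⟩
      · exact (lintegral_mono hC).trans (by simp)
    have hGc : Continuous fun x => ∫⁻ y, edist x₀ y ^ p ∂(q x) := by
      refine SeqContinuous.continuous fun xs x hx => ?_
      exact MWAux.moment_tendsto hp x₀ (fun n => hq_mem (xs n)) (hq_mem x) (hqc xs x hx)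
    have hHc : Continuous H := by
      refine (ENNReal.continuous_const_mul (MWAux.two_ne_top p)).comp ?_
      exact (ENNReal.continuous_rpow_const.comp (continuous_const.edist hf)).add continuous_const
    have hHlim : Tendsto (fun n => ∫⁻ x, H x ∂(μs n)) atTop (𝓝 (∫⁻ x, H x ∂μ)) := by
      simp_rw [fun n => hHint (μs n) (i1 n), hHint μ i2]
      refine ENNReal.Tendsto.const_mul (Tendsto.add ?_ tendsto_const_nhds)
        (Or.inr (MWAux.two_ne_top p))
      exact MWAux.moment_tendsto hp x₀ (fun n => hmap _ (hs n)) (hmap μ hμ)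
        (hcont μs μ hs hμ hconv)
    have hlim : Tendsto (fun n => ∫⁻ x, edist x₀ x ^ p ∂((μs n).bind (fun x => q x))) atTop
        (𝓝 (∫⁻ x, edist x₀ x ^ p ∂(μ.bind (fun x => q x)))) := by
      have hm : Measurable fun x : X => edist x₀ x ^ p := by fun_prop
      simp_rw [hbind _ _ hm]
      exact MWAux.dominated hw hGc hHc hmom (hHfin μ hμ) hHlim
    have hfinal := MWAux.wCost_tendsto hp x₀ hwq ((MWAux.mem_Pp hp x₀ _).1 (part1 μ hμ)).2 hlim
    have h1 := hfinal.ennrpow_const (1 / p)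
    rw [ENNReal.zero_rpow_of_pos (by positivity)] at h1
    have h2 := (ENNReal.tendsto_toReal ENNReal.zero_ne_top).comp h1
    simpa [WpTendsto, Wp, Function.comp_def] using h2
  · intro t _ _ μ _ ν _
    unfold mix
    have h1 := Measure.comp_add (κ := q) (μ := ENNReal.ofReal t • μ)
      (ν := ENNReal.ofReal (1 - t) • ν)
    rw [Measure.comp_smul, Measure.comp_smul] at h1
    exact h1
  · intro μ hμ
    have i2 : IsProbabilityMeasure μ := hμ.1
    have hmeas : Measurable fun z : X × X => (z.2, f z.1) :=
      measurable_snd.prodMk (hf.measurable.comp measurable_fst)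
    have iπ : IsProbabilityMeasure ((μ.compProd q).map fun z : X × X => (z.2, f z.1)) :=
      Measure.isProbabilityMeasure_map hmeas.aemeasurable
    have h1 : ((μ.compProd q).map fun z : X × X => (z.2, f z.1)).map Prod.fst =
        μ.bind (fun x => q x) := by
      rw [Measure.map_map measurable_fst hmeas]
      exact Measure.snd_compProd μ q
    have h2 : ((μ.compProd q).map fun z : X × X => (z.2, f z.1)).map Prod.snd = μ.map f := by
      rw [Measure.map_map measurable_snd hmeas]
      have h3 : (μ.compProd q).map Prod.fst = μ := Measure.fst_compProd μ q
      conv_rhs => rw [← h3, Measure.map_map hf.measurable measurable_fst]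
      rfl
    have hcost := MWAux.wCost_le hp _ h1 h2
    have hle : wCost p (μ.bind (fun x => q x)) (μ.map f) ≤ ENNReal.ofReal M ^ p := by
      refine hcost.trans ?_
      have hm : Measurable fun z : X × X => edist z.1 z.2 ^ p := by fun_prop
      rw [lintegral_map hm hmeas]
      refine (Measure.lintegral_compProd (hm.comp hmeas)).trans_le ?_
      exact (lintegral_mono hloc).trans (by simp)
    unfold Wp
    refine ENNReal.toReal_le_of_le_ofReal hM0 ?_
    rw [one_div, ENNReal.rpow_inv_le_iff hp0]
    exact hle
end
end

section
/- Let (X,d) be a complete separable metric space. For all mu_0, mu_1 in P_1(X) and every t in [0,1], setting mu_t = t mu_1 + (1-t) mu_0, one has the equality w_1(mu_t, mu_0) = t * w_1(mu_1, mu_0). -/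
open MeasureTheory Topology Filter Metric Set
open scoped ENNReal NNReal

noncomputable section

variable {X : Type*}

open ProbabilityTheory in
/-- Iterates of a Markov kernel. -/
def kerIter [MeasurableSpace X] (K : Kernel X X) : ℕ → Kernel X X
  | 0 => Kernel.id
  | n + 1 => K ∘ₖ kerIter K n

open ProbabilityTheory in
theorem kerIter_markov [MeasurableSpace X] (K : Kernel X X) [IsMarkovKernel K] (n : ℕ) :
    IsMarkovKernel (kerIter K n) := by
  induction n with
  | zero => unfold kerIter; infer_instance
  | succ n ih => unfold kerIter; infer_instance

open ProbabilityTheory in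
theorem key_coupling [MetricSpace X] [MeasurableSpace X] [BorelSpace X] [CompleteSpace X]
    [TopologicalSpace.SeparableSpace X] [Nonempty X]
    (μ₀ μ₁ : Measure X) [IsProbabilityMeasure μ₀] [IsProbabilityMeasure μ₁]
    (t s : ℝ≥0∞) (hts : t + s = 1) (ht : t ≠ 0)
    (π : Measure (X × X)) [IsProbabilityMeasure π]
    (h1 : π.fst = t • μ₁ + s • μ₀) (h2 : π.snd = μ₀) :
    ∃ γ : Measure (X × X), IsProbabilityMeasure γ ∧ IsCoupling γ μ₁ μ₀ ∧
      t * ∫⁻ q, edist q.1 q.2 ∂γ ≤ ∫⁻ q, edist q.1 q.2 ∂π := by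
  have ht_top : t ≠ ⊤ := by
    rintro rfl; simp at hts
  have hgeo : ∑' n : ℕ, t * s ^ n = 1 := by
    rw [ENNReal.tsum_mul_left, ENNReal.tsum_geometric]
    have hs_top : s ≠ ⊤ := by rintro rfl; simp at hts
    have : 1 - s = t := by rw [← hts]; exact ENNReal.add_sub_cancel_right hs_top
    rw [this, ENNReal.mul_inv_cancel ht ht_top]
  have hd : Measurable (fun q : X × X => edist q.1 q.2) := measurable_edist
  set K : Kernel X X := π.condKernel with hK
  have hdis : π.fst ⊗ₘ K = π := π.disintegrate _
  have := kerIter_markov K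
  -- the laws of the chain
  let ν : ℕ → Measure X := fun n => kerIter K n ∘ₘ μ₁
  let ρ : ℕ → Measure X := fun n => kerIter K n ∘ₘ μ₀
  have hν0 : ν 0 = μ₁ := by simp [ν, kerIter]
  have hρ0 : ρ 0 = μ₀ := by simp [ρ, kerIter]
  have hνs : ∀ n, ν (n + 1) = K ∘ₘ ν n := fun n => by
    simp only [ν, kerIter]; rw [Measure.comp_assoc]
  have hρs : ∀ n, ρ (n + 1) = K ∘ₘ ρ n := fun n => by
    simp only [ρ, kerIter]; rw [Measure.comp_assoc]
  have hrec : ∀ n, ρ n = t • ν (n + 1) + s • ρ (n + 1) := by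
    intro n
    induction n with
    | zero =>
      rw [hνs, hρs, hν0, hρ0, ← Measure.comp_smul, ← Measure.comp_smul, ← Measure.comp_add,
        ← h1, ← Measure.snd_compProd, hdis, h2]
    | succ n ih =>
      rw [hρs n, ih, Measure.comp_add, Measure.comp_smul, Measure.comp_smul, ← hνs, ← hρs]
  have hpart : ∀ (A : Set X) (N : ℕ),
      μ₀ A = ∑ n ∈ Finset.range N, t * s ^ n * ν (n + 1) A + s ^ N * ρ N A := by
    intro A N
    induction N with
    | zero => simp [hρ0]
    | succ N ih =>
      rw [ih, hrec N, Finset.sum_range_succ]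
      simp only [Measure.add_apply, Measure.smul_apply, smul_eq_mul]
      ring
  have : ∀ n, IsProbabilityMeasure (ν n) := fun n => by
    simp only [ν]; infer_instance
  have hmu : Measure.sum (fun n => (t * s ^ n) • ν (n + 1)) = μ₀ := by
    have hp : IsProbabilityMeasure (Measure.sum (fun n => (t * s ^ n) • ν (n + 1))) := by
      constructor
      rw [Measure.sum_apply _ MeasurableSet.univ]
      simpa using hgeo
    refine Measure.eq_of_le_of_isProbabilityMeasure ?_
    refine Measure.le_iff.2 fun A hA => ?_
    rw [Measure.sum_apply _ hA]
    refine ENNReal.tsum_le_of_sum_range_le fun N => ?_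
    rw [hpart A N]
    simp
  let P : ℕ → Measure (X × X) := fun n => μ₁ ⊗ₘ kerIter K n
  let D : ℕ → ℝ≥0∞ := fun n => ∫⁻ q, edist q.1 q.2 ∂(P n)
  let c : X → ℝ≥0∞ := fun x => ∫⁻ y, edist x y ∂(K x)
  have hc : Measurable c := hd.lintegral_kernel_prod_right'
  let a : ℕ → ℝ≥0∞ := fun n => ∫⁻ x, c x ∂(ν n)
  have hD0 : D 0 = 0 := by
    simp only [D, P]
    rw [Measure.lintegral_compProd hd]
    simp [kerIter, Kernel.id_apply, lintegral_dirac' _ (measurable_edist_right)]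
  have hDs : ∀ n, D (n + 1) ≤ D n + a n := by
    intro n
    have e1 : D (n + 1) = ∫⁻ x, ∫⁻ y, ∫⁻ z, edist x z ∂(K y) ∂(kerIter K n x) ∂μ₁ := by
      simp only [D, P]
      rw [Measure.lintegral_compProd hd]
      refine lintegral_congr fun x => ?_
      simp only [kerIter]
      rw [Kernel.lintegral_comp _ _ _ measurable_edist_right]
    have e2 : D n + a n =
        ∫⁻ x, ∫⁻ y, (edist x y + c y) ∂(kerIter K n x) ∂μ₁ := by
      simp only [D, P, a, ν]
      rw [Measure.lintegral_compProd hd,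
        Measure.lintegral_bind (Kernel.aemeasurable _) hc.aemeasurable,
        ← lintegral_add_right _ hc.lintegral_kernel]
      refine lintegral_congr fun x => ?_
      rw [lintegral_add_right _ hc]
    rw [e1, e2]
    refine lintegral_mono fun x => lintegral_mono fun y => ?_
    calc ∫⁻ z, edist x z ∂(K y) ≤ ∫⁻ z, (edist x y + edist y z) ∂(K y) :=
          lintegral_mono fun z => edist_triangle _ _ _
      _ = edist x y + c y := by
          rw [lintegral_add_left measurable_const]; simp [c]
  have hsum : ∀ N, t * ∑ n ∈ Finset.range N, s ^ n * D (n + 1) + s ^ N * D N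
      ≤ ∑ n ∈ Finset.range N, s ^ n * a n := by
    intro N
    induction N with
    | zero => simp [hD0]
    | succ N ih =>
      rw [Finset.sum_range_succ, Finset.sum_range_succ]
      calc t * (∑ n ∈ Finset.range N, s ^ n * D (n + 1) + s ^ N * D (N + 1))
            + s ^ (N + 1) * D (N + 1)
          = t * ∑ n ∈ Finset.range N, s ^ n * D (n + 1) + (t + s) * (s ^ N * D (N + 1)) := by
            ring
        _ ≤ t * ∑ n ∈ Finset.range N, s ^ n * D (n + 1) + s ^ N * (D N + a N) := by
            rw [hts, one_mul]
            gcongr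
            exact hDs N
        _ = (t * ∑ n ∈ Finset.range N, s ^ n * D (n + 1) + s ^ N * D N) + s ^ N * a N := by
            ring
        _ ≤ _ := by gcongr
  have hsum' : t * ∑' n, s ^ n * D (n + 1) ≤ ∑' n, s ^ n * a n := by
    rw [← ENNReal.tsum_mul_left]
    refine ENNReal.tsum_le_of_sum_range_le fun N => ?_
    rw [← Finset.mul_sum]
    exact (le_self_add.trans (hsum N)).trans (ENNReal.sum_le_tsum _)
  have hcost : ∫⁻ q, edist q.1 q.2 ∂π = t * ∑' n, s ^ n * a n := by
    have e : ∫⁻ x, c x ∂μ₀ = t * ∑' n, s ^ n * a (n + 1) := by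
      rw [← hmu, lintegral_sum_measure, ← ENNReal.tsum_mul_left]
      refine tsum_congr fun n => ?_
      rw [lintegral_smul_measure, smul_eq_mul, mul_assoc]
    have e0 : a 0 = ∫⁻ x, c x ∂μ₁ := by simp only [a]; rw [hν0]
    conv_lhs => rw [← hdis]
    rw [Measure.lintegral_compProd hd]
    change ∫⁻ x, c x ∂π.fst = _
    rw [h1, lintegral_add_measure, lintegral_smul_measure, lintegral_smul_measure, e,
      tsum_eq_zero_add' (f := fun n => s ^ n * a n) ENNReal.summable, ← e0]
    simp only [pow_succ', mul_assoc, ENNReal.tsum_mul_left, smul_eq_mul]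
    ring
  let γ : Measure (X × X) := Measure.sum (fun n => (t * s ^ n) • P (n + 1))
  have hfst : γ.map Prod.fst = μ₁ := by
    simp only [γ]
    rw [Measure.map_sum measurable_fst.aemeasurable]
    ext A hA
    have : ∀ n, (P n).map Prod.fst = μ₁ := fun n => Measure.fst_compProd _ _
    simp only [Measure.sum_apply _ hA, Measure.map_smul, this, Measure.smul_apply, smul_eq_mul]
    rw [ENNReal.tsum_mul_right, hgeo, one_mul]
  have hsnd : γ.map Prod.snd = μ₀ := by
    simp only [γ]
    rw [Measure.map_sum measurable_snd.aemeasurable]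
    have : ∀ n, (P n).map Prod.snd = ν n := fun n => Measure.snd_compProd _ _
    simp only [Measure.map_smul, this]
    exact hmu
  refine ⟨γ, ?_, ⟨hfst, hsnd⟩, ?_⟩
  · have : IsProbabilityMeasure (γ.map Prod.fst) := by rw [hfst]; infer_instance
    exact Measure.isProbabilityMeasure_of_map (Prod.fst : X × X → X)
  · rw [hcost]
    gcongr
    refine le_trans (le_of_eq ?_) hsum'
    simp only [γ]
    rw [lintegral_sum_measure, ← ENNReal.tsum_mul_left]
    refine tsum_congr fun n => ?_
    rw [lintegral_smul_measure, smul_eq_mul, mul_assoc]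

theorem cost_fun [MetricSpace X] (q : X × X) :
    ENNReal.ofReal (dist q.1 q.2 ^ (1 : ℝ)) = edist q.1 q.2 := by
  rw [Real.rpow_one, edist_dist]

theorem mix_upper [MetricSpace X] [MeasurableSpace X] [BorelSpace X]
    [SecondCountableTopology X]
    (μ₀ μ₁ : Measure X) [IsProbabilityMeasure μ₀]
    (t s : ℝ≥0∞) (hts : t + s = 1) (σ : Measure (X × X)) [IsProbabilityMeasure σ]
    (hσ : IsCoupling σ μ₁ μ₀) :
    wCost 1 (t • μ₁ + s • μ₀) μ₀ ≤ t * ∫⁻ q, edist q.1 q.2 ∂σ := by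
  have hdm : Measurable (fun x : X => (x, x)) := by fun_prop
  have hd : Measurable (fun q : X × X => edist q.1 q.2) := measurable_edist
  have : IsProbabilityMeasure (μ₀.map fun x => (x, x)) :=
    Measure.isProbabilityMeasure_map hdm.aemeasurable
  unfold wCost
  refine le_trans (iInf₂_le (t • σ + s • μ₀.map (fun x => (x, x))) ?_) ?_
  · refine ⟨⟨?_⟩, ?_, ?_⟩
    on_goal 1 => simp [hts]
    · rw [Measure.map_add _ _ measurable_fst, Measure.map_smul, Measure.map_smul, hσ.1,
        Measure.map_map measurable_fst hdm]
      simp [Function.comp_def]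
    · rw [Measure.map_add _ _ measurable_snd, Measure.map_smul, Measure.map_smul, hσ.2,
        Measure.map_map measurable_snd hdm]
      simp [Function.comp_def, ← add_smul, hts]
  · simp only [cost_fun]
    rw [lintegral_add_measure, lintegral_smul_measure, lintegral_smul_measure,
      lintegral_map hd hdm]
    simp

/-- For `μ₀, μ₁ ∈ P₁(X)` and `t ∈ [0,1]`, putting `μ_t = t μ₁ + (1-t) μ₀` one has
`w₁(μ_t, μ₀) = t ⬝ w₁(μ₁, μ₀)`. -/
theorem w1_convex_combination_eq
    [MetricSpace X] [MeasurableSpace X] [BorelSpace X] [CompleteSpace X]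
    [TopologicalSpace.SeparableSpace X] (x₀ : X)
    (μ₀ μ₁ : Measure X) (hμ₀ : μ₀ ∈ Pp 1 x₀) (hμ₁ : μ₁ ∈ Pp 1 x₀)
    (t : ℝ) (ht0 : 0 ≤ t) (ht1 : t ≤ 1) :
    Wp 1 (mix t μ₁ μ₀) μ₀ = t * Wp 1 μ₁ μ₀ := by
  have := hμ₀.1
  have := hμ₁.1
  have : Nonempty X := ⟨x₀⟩
  have hts : ENNReal.ofReal t + ENNReal.ofReal (1 - t) = 1 := by
    rw [← ENNReal.ofReal_add ht0 (by linarith)]; simp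
  have main : wCost 1 (mix t μ₁ μ₀) μ₀ = ENNReal.ofReal t * wCost 1 μ₁ μ₀ := by
    rcases eq_or_lt_of_le ht0 with rfl | htpos
    · have h := mix_upper μ₀ μ₁ _ _ hts (μ₁.prod μ₀) ⟨by simp, by simp⟩
      simp only [ENNReal.ofReal_zero, zero_mul, nonpos_iff_eq_zero] at h ⊢
      simpa [mix] using h
    · have htne : ENNReal.ofReal t ≠ 0 := by simpa using htpos
      apply le_antisymm
      · conv_rhs => unfold wCost
        rw [ENNReal.mul_iInf_of_ne htne ENNReal.ofReal_ne_top]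
        refine le_iInf fun σ => ?_
        rw [ENNReal.mul_iInf_of_ne htne ENNReal.ofReal_ne_top]
        refine le_iInf fun hσ => ?_
        have := hσ.1
        simp only [cost_fun]
        exact mix_upper μ₀ μ₁ _ _ hts σ hσ.2
      · conv_rhs => unfold wCost
        refine le_iInf₂ fun π hπ => ?_
        have := hπ.1
        obtain ⟨γ, hγ, hγc, hle⟩ := key_coupling μ₀ μ₁ _ _ hts htne π hπ.2.1 hπ.2.2
        simp only [cost_fun]
        refine le_trans ?_ hle
        gcongr
        unfold wCost
        refine (iInf₂_le γ ⟨hγ, hγc⟩).trans ?_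
        simp only [cost_fun, le_refl]
  unfold Wp
  rw [main]
  simp [ENNReal.toReal_mul, ENNReal.toReal_ofReal ht0]
end
end

section
/- Let (X,d) be a complete separable metric space and let P: P_1(X) -> P_1(X) be a convex linear map with a fixed point mu_0. Suppose N is a w_1-neighborhood of mu_0 in P_1(X) and R >= 0 are such that w_1(P^k(mu), mu_0) <= R for all mu in N and all k >= 0. Then every forward orbit of P is bounded: for each mu_1 in P_1(X) there is t in (0,1] with t mu_1 + (1-t) mu_0 in N, and for any such t one has w_1(P^k(mu_1), mu_0) <= R/t for all k >= 0. -/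
open MeasureTheory Topology Filter Metric Set
open scoped ENNReal NNReal

noncomputable section

variable {X : Type*}

section Helpers

set_option linter.unusedSectionVars false

variable [MetricSpace X] [MeasurableSpace X] [BorelSpace X] [CompleteSpace X]
    [TopologicalSpace.SeparableSpace X]

lemma wCost_le (μ ν : Measure X) (π : Measure (X × X)) [IsProbabilityMeasure π]
    (h : IsCoupling π μ ν) :
    wCost 1 μ ν ≤ ∫⁻ q, edist q.1 q.2 ∂π := by
  unfold wCost
  refine (iInf₂_le π ⟨inferInstance, h⟩).trans (le_of_eq ?_)
  simp [edist_dist]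

lemma exists_coupling (μ ν : Measure X) {c : ℝ≥0∞} (h : wCost 1 μ ν < c) :
    ∃ π : Measure (X × X), IsProbabilityMeasure π ∧ IsCoupling π μ ν ∧
      ∫⁻ q, edist q.1 q.2 ∂π < c := by
  unfold wCost at h
  simp only [iInf_lt_iff] at h
  obtain ⟨π, ⟨h1, h2⟩, h3⟩ := h
  refine ⟨π, h1, h2, ?_⟩
  simpa [edist_dist] using h3

lemma glue (μ ν ρ : Measure X) (π π' : Measure (X × X)) [IsProbabilityMeasure π]
    [IsProbabilityMeasure π'] (h : IsCoupling π μ ν) (h' : IsCoupling π' ν ρ) :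
    ∃ τ : Measure (X × X), IsProbabilityMeasure τ ∧ IsCoupling τ μ ρ ∧
      ∫⁻ q, edist q.1 q.2 ∂τ ≤ ∫⁻ q, edist q.1 q.2 ∂π + ∫⁻ q, edist q.1 q.2 ∂π' := by
  have : SecondCountableTopology X := UniformSpace.secondCountable_of_separable X
  have : Nonempty X := (nonempty_of_isProbabilityMeasure π).map Prod.fst
  let K : ProbabilityTheory.Kernel (X × X) X := π'.condKernel.comap (Prod.snd : X × X → X) measurable_snd
  let τ : Measure ((X × X) × X) := π.compProd K
  have key : ∀ f : X × X → ℝ≥0∞, Measurable f →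
      ∫⁻ q, f (q.1.2, q.2) ∂τ = ∫⁻ q, f q ∂π' := by
    intro f hf
    have hfst : π'.fst = π.map Prod.snd := by rw [h.2, ← h'.1]; rfl
    rw [Measure.lintegral_compProd (f := fun q : (X × X) × X => f (q.1.2, q.2)) (by fun_prop)]
    conv_rhs => rw [← π'.disintegrate π'.condKernel]
    rw [Measure.lintegral_compProd hf, hfst, lintegral_map _ measurable_snd]
    · rfl
    · exact hf.lintegral_kernel_prod_right'
  have hτ1 : τ.map Prod.fst = π := Measure.fst_compProd π K
  have hτ2 : τ.map (fun q => (q.1.2, q.2)) = π' := by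
    ext s hs
    have := key (s.indicator 1) (measurable_one.indicator hs)
    rw [← lintegral_map (f := s.indicator 1) (g := fun q : (X × X) × X => (q.1.2, q.2))
      (measurable_one.indicator hs) (by fun_prop)] at this
    simpa [lintegral_indicator_one hs] using this
  have hm : Measurable (fun q : (X × X) × X => (q.1.1, q.2)) := by fun_prop
  refine ⟨τ.map (fun q => (q.1.1, q.2)), Measure.isProbabilityMeasure_map hm.aemeasurable,
    ⟨?_, ?_⟩, ?_⟩
  · rw [Measure.map_map measurable_fst hm, ← h.1, ← hτ1,
      Measure.map_map measurable_fst measurable_fst]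
    rfl
  · rw [Measure.map_map measurable_snd hm, ← h'.2, ← hτ2,
      Measure.map_map measurable_snd (by fun_prop)]
    rfl
  · have he : Measurable (fun q : X × X => edist q.1 q.2) := by fun_prop
    rw [lintegral_map he hm]
    conv_rhs => rw [← hτ1, ← hτ2]
    rw [lintegral_map he measurable_fst, lintegral_map he (by fun_prop),
      ← lintegral_add_left (by fun_prop)]
    exact lintegral_mono fun q => edist_triangle _ _ _

lemma wCost_triangle (μ ν ρ : Measure X) :
    wCost 1 μ ρ ≤ wCost 1 μ ν + wCost 1 ν ρ := by
  by_cases hA : wCost 1 μ ν = ⊤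
  · simp [hA]
  by_cases hB : wCost 1 ν ρ = ⊤
  · simp [hB]
  refine ENNReal.le_of_forall_pos_le_add fun ε hε _ => ?_
  have hε2 : ((ε / 2 : ℝ≥0) : ℝ≥0∞) ≠ 0 := by
    have : (ε / 2 : ℝ≥0) ≠ 0 := (half_pos hε).ne'
    exact_mod_cast this
  obtain ⟨π, i1, c1, l1⟩ := exists_coupling μ ν (ENNReal.lt_add_right hA hε2)
  obtain ⟨π', i2, c2, l2⟩ := exists_coupling ν ρ (ENNReal.lt_add_right hB hε2)
  obtain ⟨τ, i3, c3, l3⟩ := glue μ ν ρ π π' c1 c2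
  refine (wCost_le μ ρ τ c3).trans (l3.trans ((add_le_add l1.le l2.le).trans (le_of_eq ?_)))
  have : (ε : ℝ≥0∞) = ((ε / 2 : ℝ≥0) : ℝ≥0∞) + ((ε / 2 : ℝ≥0) : ℝ≥0∞) := by
    rw [← ENNReal.coe_add, add_halves]
  rw [this]; ring

lemma ofReal_add_one_sub {t : ℝ} (h0 : 0 ≤ t) (h1 : t ≤ 1) :
    ENNReal.ofReal t + ENNReal.ofReal (1 - t) = 1 := by
  rw [← ENNReal.ofReal_add h0 (by linarith)]; simp

lemma mix_prob {Y : Type*} [MeasurableSpace Y] {t : ℝ} (h0 : 0 ≤ t) (h1 : t ≤ 1)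
    (μ ν : Measure Y) [IsProbabilityMeasure μ] [IsProbabilityMeasure ν] :
    IsProbabilityMeasure (mix t μ ν) :=
  ⟨by simp [mix, ofReal_add_one_sub h0 h1]⟩

lemma mix_self {Y : Type*} [MeasurableSpace Y] {t : ℝ} (h0 : 0 ≤ t) (h1 : t ≤ 1)
    (μ : Measure Y) : mix t μ μ = μ := by
  rw [mix, ← add_smul, ofReal_add_one_sub h0 h1, one_smul]

lemma mix_comm {Y : Type*} [MeasurableSpace Y] (t : ℝ)
    (μ ν : Measure Y) : mix t μ ν = mix (1 - t) ν μ := by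
  simp [mix, add_comm]

lemma map_mix {Y Z : Type*} [MeasurableSpace Y] [MeasurableSpace Z] (t : ℝ)
    (μ ν : Measure Y) {f : Y → Z} (hf : Measurable f) :
    (mix t μ ν).map f = mix t (μ.map f) (ν.map f) := by
  simp [mix, Measure.map_add _ _ hf, Measure.map_smul]

/-- Mixing both measures with a common one contracts the cost. -/
lemma wCost_mix_le {t : ℝ} (h0 : 0 ≤ t) (h1 : t ≤ 1) (μ ν σ : Measure X)
    [IsProbabilityMeasure σ] (hfin : wCost 1 μ ν ≠ ⊤) :
    wCost 1 (mix t μ σ) (mix t ν σ) ≤ ENNReal.ofReal t * wCost 1 μ ν := by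
  have : SecondCountableTopology X := UniformSpace.secondCountable_of_separable X
  refine ENNReal.le_of_forall_pos_le_add fun ε hε _ => ?_
  have hε2 : (ε : ℝ≥0∞) ≠ 0 := by exact_mod_cast hε.ne'
  obtain ⟨π, i1, c1, l1⟩ := exists_coupling μ ν (ENNReal.lt_add_right hfin hε2)
  have hd : Measurable (fun x : X => (x, x)) := by fun_prop
  have he : Measurable (fun q : X × X => edist q.1 q.2) := by fun_prop
  have : IsProbabilityMeasure (σ.map (fun x : X => (x, x))) :=
    Measure.isProbabilityMeasure_map hd.aemeasurable
  have := mix_prob h0 h1 π (σ.map (fun x : X => (x, x)))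
  have hc : IsCoupling (mix t π (σ.map (fun x : X => (x, x)))) (mix t μ σ) (mix t ν σ) := by
    constructor
    · rw [map_mix t _ _ measurable_fst, c1.1, Measure.map_map measurable_fst hd]
      congr 1
      exact Measure.map_id
    · rw [map_mix t _ _ measurable_snd, c1.2, Measure.map_map measurable_snd hd]
      congr 1
      exact Measure.map_id
  refine (wCost_le _ _ _ hc).trans ?_
  rw [mix, lintegral_add_measure, lintegral_smul_measure, lintegral_smul_measure,
    lintegral_map he hd]
  simp only [edist_self, lintegral_zero, smul_eq_mul, mul_zero, add_zero]
  calc ENNReal.ofReal t * ∫⁻ q, edist q.1 q.2 ∂π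
      ≤ ENNReal.ofReal t * (wCost 1 μ ν + ε) := by gcongr
    _ = ENNReal.ofReal t * wCost 1 μ ν + ENNReal.ofReal t * ε := mul_add _ _ _
    _ ≤ ENNReal.ofReal t * wCost 1 μ ν + 1 * ε := by
        gcongr
        simpa using h1
    _ = _ := by rw [one_mul]

lemma wCost_ne_top (x₀ : X) {μ ν : Measure X} (hμ : μ ∈ Pp 1 x₀) (hν : ν ∈ Pp 1 x₀) :
    wCost 1 μ ν ≠ ⊤ := by
  have : SecondCountableTopology X := UniformSpace.secondCountable_of_separable X
  obtain ⟨i1, m1⟩ := hμ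
  obtain ⟨i2, m2⟩ := hν
  have hc : IsCoupling (μ.prod ν) μ ν := ⟨by simp, by simp⟩
  refine ne_top_of_le_ne_top ?_ (wCost_le _ _ _ hc)
  have h1 : ∫⁻ x, edist x₀ x ∂μ < ⊤ := by simpa [FiniteMoment, edist_dist] using m1
  have h2 : ∫⁻ x, edist x₀ x ∂ν < ⊤ := by simpa [FiniteMoment, edist_dist] using m2
  have he : Measurable (fun x : X => edist x₀ x) := by fun_prop
  have hle : ∫⁻ q, edist q.1 q.2 ∂(μ.prod ν) ≤ ∫⁻ x, edist x₀ x ∂μ + ∫⁻ x, edist x₀ x ∂ν := by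
    conv_rhs => rw [← hc.1]
    conv_rhs => rw [lintegral_map he measurable_fst]
    conv_rhs => 
      arg 2
      rw [← hc.2]
    rw [lintegral_map he measurable_snd, ← lintegral_add_left (by fun_prop)]
    exact lintegral_mono fun q => by
      have := edist_triangle q.1 x₀ q.2
      rwa [edist_comm q.1 x₀] at this
  exact (hle.trans_lt (ENNReal.add_lt_top.2 ⟨h1, h2⟩)).ne

lemma mix_mem (x₀ : X) {t : ℝ} (h0 : 0 ≤ t) (h1 : t ≤ 1) {μ ν : Measure X}
    (hμ : μ ∈ Pp 1 x₀) (hν : ν ∈ Pp 1 x₀) : mix t μ ν ∈ Pp 1 x₀ := by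
  obtain ⟨i1, m1⟩ := hμ
  obtain ⟨i2, m2⟩ := hν
  refine ⟨mix_prob h0 h1 μ ν, ?_⟩
  unfold FiniteMoment at *
  rw [mix, lintegral_add_measure, lintegral_smul_measure, lintegral_smul_measure]
  exact ENNReal.add_lt_top.2 ⟨ENNReal.mul_lt_top ENNReal.ofReal_lt_top m1,
    ENNReal.mul_lt_top ENNReal.ofReal_lt_top m2⟩

lemma Wp_one (μ ν : Measure X) : Wp 1 μ ν = (wCost 1 μ ν).toReal := by
  simp [Wp]

lemma Wp_mix_le (x₀ : X) {t : ℝ} (h0 : 0 ≤ t) (h1 : t ≤ 1) {μ ν σ : Measure X}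
    (hμ : μ ∈ Pp 1 x₀) (hν : ν ∈ Pp 1 x₀) (hσ : σ ∈ Pp 1 x₀) :
    Wp 1 (mix t μ σ) (mix t ν σ) ≤ t * Wp 1 μ ν := by
  have := hσ.1
  have hf := wCost_ne_top x₀ hμ hν
  have h := wCost_mix_le h0 h1 μ ν σ hf
  have := ENNReal.toReal_mono (ENNReal.mul_ne_top ENNReal.ofReal_ne_top hf) h
  rwa [ENNReal.toReal_mul, ENNReal.toReal_ofReal h0, ← Wp_one, ← Wp_one] at this

lemma le_Wp_mix (x₀ : X) {t : ℝ} (h0 : 0 ≤ t) (h1 : t ≤ 1) {μ ν : Measure X}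
    (hμ : μ ∈ Pp 1 x₀) (hν : ν ∈ Pp 1 x₀) :
    t * Wp 1 μ ν ≤ Wp 1 (mix t μ ν) ν := by
  have hm := mix_mem x₀ h0 h1 hμ hν
  have htri := ENNReal.toReal_mono
    (ENNReal.add_ne_top.2 ⟨wCost_ne_top x₀ hμ hm, wCost_ne_top x₀ hm hν⟩)
    (wCost_triangle μ (mix t μ ν) ν)
  rw [ENNReal.toReal_add (wCost_ne_top x₀ hμ hm) (wCost_ne_top x₀ hm hν),
    ← Wp_one, ← Wp_one, ← Wp_one] at htri
  have h := Wp_mix_le x₀ (t := 1 - t) (by linarith) (by linarith) hμ hν hμ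
  rw [mix_self (by linarith) (by linarith), ← mix_comm] at h
  linarith

end Helpers

/-- If `P : P₁(X) → P₁(X)` is convex linear with a fixed point `μ₀`, `N` is a
`w₁`-neighborhood of `μ₀` in `P₁(X)` and `R ≥ 0` is such that `w₁(P^k(μ), μ₀) ≤ R` for all
`μ ∈ N` and `k ≥ 0`, then every forward orbit of `P` is bounded: for each `μ₁ ∈ P₁(X)`
there is `t ∈ (0,1]` with `t μ₁ + (1-t) μ₀ ∈ N`, and for any such `t`,
`w₁(P^k(μ₁), μ₀) ≤ R/t` for all `k`. -/
theorem convex_linear_orbits_bounded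
    [MetricSpace X] [MeasurableSpace X] [BorelSpace X] [CompleteSpace X]
    [TopologicalSpace.SeparableSpace X] (x₀ : X)
    (P : Measure X → Measure X)
    (hPmap : ∀ μ ∈ Pp 1 x₀, P μ ∈ Pp 1 x₀)
    (hPconv : ∀ t : ℝ, 0 ≤ t → t ≤ 1 → ∀ μ ∈ Pp 1 x₀, ∀ ν ∈ Pp 1 x₀,
      P (mix t μ ν) = mix t (P μ) (P ν))
    (μ₀ : Measure X) (hμ₀ : μ₀ ∈ Pp 1 x₀) (hfix : P μ₀ = μ₀)
    (N : Set (Measure X)) (hN_sub : N ⊆ Pp 1 x₀) (hμ₀N : μ₀ ∈ N)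
    (hN_nbhd : ∃ ρ : ℝ, 0 < ρ ∧ ∀ μ ∈ Pp 1 x₀, Wp 1 μ μ₀ < ρ → μ ∈ N)
    (R : ℝ) (hR : 0 ≤ R)
    (hbdd : ∀ μ ∈ N, ∀ k : ℕ, Wp 1 (P^[k] μ) μ₀ ≤ R) :
    ∀ μ₁ ∈ Pp 1 x₀,
      (∃ t : ℝ, 0 < t ∧ t ≤ 1 ∧ mix t μ₁ μ₀ ∈ N) ∧
      (∀ t : ℝ, 0 < t → t ≤ 1 → mix t μ₁ μ₀ ∈ N →
        ∀ k : ℕ, Wp 1 (P^[k] μ₁) μ₀ ≤ R / t) := by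
  intro μ₁ hμ₁
  refine ⟨?_, ?_⟩
  · obtain ⟨ρ, hρ, hN⟩ := hN_nbhd
    have hW : 0 ≤ Wp 1 μ₁ μ₀ := ENNReal.toReal_nonneg
    have hpos : 0 < Wp 1 μ₁ μ₀ + ρ := by linarith
    have ht0 : 0 < ρ / (Wp 1 μ₁ μ₀ + ρ) := div_pos hρ hpos
    have ht1 : ρ / (Wp 1 μ₁ μ₀ + ρ) ≤ 1 := (div_le_one hpos).2 (by linarith)
    refine ⟨_, ht0, ht1, hN _ (mix_mem x₀ ht0.le ht1 hμ₁ hμ₀) ?_⟩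
    have h := Wp_mix_le x₀ ht0.le ht1 hμ₁ hμ₀ hμ₀
    rw [mix_self ht0.le ht1] at h
    refine h.trans_lt ?_
    rw [div_mul_eq_mul_div, div_lt_iff₀ hpos]
    nlinarith [mul_pos hρ hρ]
  · intro t ht0 ht1 htN k
    have hiter : ∀ k : ℕ, P^[k] μ₁ ∈ Pp 1 x₀ ∧
        P^[k] (mix t μ₁ μ₀) = mix t (P^[k] μ₁) μ₀ := by
      intro k
      induction k with
      | zero => exact ⟨hμ₁, rfl⟩
      | succ k ih =>
        rw [Function.iterate_succ_apply', Function.iterate_succ_apply', ih.2,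
          hPconv t ht0.le ht1 _ ih.1 _ hμ₀, hfix]
        exact ⟨hPmap _ ih.1, rfl⟩
    have h1 := hbdd _ htN k
    rw [(hiter k).2] at h1
    have h2 := le_Wp_mix x₀ ht0.le ht1 (hiter k).1 hμ₀
    rw [le_div_iff₀ ht0]
    linarith
end
end

section
/- Let (X,d) be a non-compact proper complete separable metric space with base point x0 and 1 <= p < infinity. Then for every eps > 0 the closed ball {mu in P_p(X) : w_p(mu, delta_{x0}) <= eps} is not compact in (P_p(X), w_p); in particular the Wasserstein space (P_p(X), w_p) is not locally compact. -/
open MeasureTheory Topology Filter Metric Set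
open scoped ENNReal NNReal

noncomputable section

variable {X : Type*}

lemma aux_meas [MetricSpace X] [MeasurableSpace X] [BorelSpace X] [ProperSpace X] (p : ℝ) :
    Measurable (fun q : X × X => ENNReal.ofReal (dist q.1 q.2 ^ p)) := by
  have h : Measurable (fun q : X × X => dist q.1 q.2) := measurable_fst.dist measurable_snd
  exact (h.pow_const p).ennreal_ofReal

lemma aux_meas' [MetricSpace X] [MeasurableSpace X] [BorelSpace X] [ProperSpace X] (p : ℝ)
    (x₀ : X) : Measurable (fun x : X => ENNReal.ofReal (dist x₀ x ^ p)) :=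
  (aux_meas p).comp (measurable_const.prodMk measurable_id)

lemma aux_unbounded [MetricSpace X] [ProperSpace X] (hX : ¬ CompactSpace X) (x₀ : X) (R : ℝ) :
    ∃ x : X, R < dist x₀ x := by
  by_contra! h
  apply hX
  refine ⟨(isCompact_closedBall x₀ R).of_isClosed_subset isClosed_univ ?_⟩
  intro x _
  rw [mem_closedBall, dist_comm]
  exact h x

lemma aux_pt (p : ℝ) (hp : 1 ≤ p) (a b c : ℝ) (ha : 0 ≤ a) (hb : 0 ≤ b) (hc : 0 ≤ c)
    (h : a ≤ b + c) :
    ENNReal.ofReal (a ^ p) ≤ ENNReal.ofReal (2 ^ p) * ENNReal.ofReal (b ^ p) +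
      ENNReal.ofReal (2 ^ p) * (if a / 2 ≤ c then ENNReal.ofReal (c ^ p) else 0) := by
  have hp0 : 0 ≤ p := by linarith
  by_cases h1 : a / 2 ≤ c
  · rw [if_pos h1]
    refine le_trans ?_ le_add_self
    rw [← ENNReal.ofReal_mul (by positivity), ← Real.mul_rpow (by norm_num) hc]
    exact ENNReal.ofReal_le_ofReal (Real.rpow_le_rpow ha (by linarith) hp0)
  · refine le_trans ?_ le_self_add
    rw [← ENNReal.ofReal_mul (by positivity), ← Real.mul_rpow (by norm_num) hb]
    exact ENNReal.ofReal_le_ofReal (Real.rpow_le_rpow ha (by push Not at h1; linarith) hp0)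

lemma aux_prod_coupling [MeasurableSpace X] (μ ν : Measure X) [IsProbabilityMeasure μ]
    [IsProbabilityMeasure ν] : IsCoupling (μ.prod ν) μ ν := by
  constructor
  · simp [Measure.map_fst_prod]
  · simp [Measure.map_snd_prod]

lemma aux_finite [MetricSpace X] [MeasurableSpace X] [BorelSpace X] [ProperSpace X]
    (p : ℝ) (hp : 1 ≤ p) (x₀ : X) (μ ν : Measure X) (hμ : μ ∈ Pp p x₀) (hν : ν ∈ Pp p x₀) :
    wCost p μ ν < ⊤ := by
  obtain ⟨hμ1, hμ2⟩ := hμ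
  obtain ⟨hν1, hν2⟩ := hν
  unfold FiniteMoment at hμ2 hν2
  have hc := aux_prod_coupling μ ν
  have h1 : wCost p μ ν ≤ ∫⁻ q, ENNReal.ofReal (dist q.1 q.2 ^ p) ∂(μ.prod ν) :=
    iInf₂_le (μ.prod ν) ⟨inferInstance, hc⟩
  refine lt_of_le_of_lt h1 ?_
  have h2 : ∫⁻ q, ENNReal.ofReal (dist q.1 q.2 ^ p) ∂(μ.prod ν) ≤
      ∫⁻ q : X × X, (ENNReal.ofReal (2 ^ p) * ENNReal.ofReal (dist x₀ q.1 ^ p) +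
        ENNReal.ofReal (2 ^ p) * ENNReal.ofReal (dist x₀ q.2 ^ p)) ∂(μ.prod ν) := by
    apply lintegral_mono
    intro q
    refine (aux_pt p hp (dist q.1 q.2) (dist x₀ q.1) (dist x₀ q.2) dist_nonneg dist_nonneg
      dist_nonneg ?_).trans ?_
    · rw [dist_comm x₀ q.1]; exact dist_triangle _ _ _
    · dsimp only
      gcongr
      split_ifs
      · exact le_rfl
      · exact zero_le
  refine lt_of_le_of_lt h2 ?_
  have m := aux_meas' p x₀
  have m1 : Measurable (fun q : X × X => ENNReal.ofReal (dist x₀ q.1 ^ p)) :=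
    m.comp measurable_fst
  have m2 : Measurable (fun q : X × X => ENNReal.ofReal (dist x₀ q.2 ^ p)) :=
    m.comp measurable_snd
  rw [lintegral_add_left (m1.const_mul _), lintegral_const_mul _ m1, lintegral_const_mul _ m2]
  have e1 : ∫⁻ q : X × X, ENNReal.ofReal (dist x₀ q.1 ^ p) ∂(μ.prod ν)
      = ∫⁻ x, ENNReal.ofReal (dist x₀ x ^ p) ∂μ := by
    conv_rhs => rw [← hc.1]
    rw [lintegral_map m measurable_fst]
  have e2 : ∫⁻ q : X × X, ENNReal.ofReal (dist x₀ q.2 ^ p) ∂(μ.prod ν)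
      = ∫⁻ x, ENNReal.ofReal (dist x₀ x ^ p) ∂ν := by
    conv_rhs => rw [← hc.2]
    rw [lintegral_map m measurable_snd]
  rw [e1, e2]
  exact ENNReal.add_lt_top.2 ⟨ENNReal.mul_lt_top ENNReal.ofReal_lt_top hμ2,
    ENNReal.mul_lt_top ENNReal.ofReal_lt_top hν2⟩

lemma aux_dirac [MetricSpace X] [MeasurableSpace X] [BorelSpace X] [ProperSpace X]
    (p : ℝ) (x₀ : X) (μ : Measure X) [IsProbabilityMeasure μ] :
    wCost p μ (Measure.dirac x₀) ≤ ∫⁻ x, ENNReal.ofReal (dist x₀ x ^ p) ∂μ := by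
  have h1 : wCost p μ (Measure.dirac x₀) ≤
      ∫⁻ q, ENNReal.ofReal (dist q.1 q.2 ^ p) ∂(μ.prod (Measure.dirac x₀)) :=
    iInf₂_le (μ.prod (Measure.dirac x₀)) ⟨inferInstance, aux_prod_coupling _ _⟩
  refine h1.trans ?_
  rw [lintegral_prod _ (aux_meas p).aemeasurable]
  apply lintegral_mono
  intro x
  dsimp only
  rw [lintegral_dirac, dist_comm]

/-- Key estimate: mass far away costs a fixed amount to be transported to `μ`. -/
lemma aux_key [MetricSpace X] [MeasurableSpace X] [BorelSpace X] [ProperSpace X]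
    (p : ℝ) (hp : 1 ≤ p) (x₀ y : X) (ν μ : Measure X) :
    ENNReal.ofReal (dist x₀ y ^ p) * ν {y} ≤ ENNReal.ofReal (2 ^ p) * wCost p ν μ +
      ENNReal.ofReal (2 ^ p) * ∫⁻ z, (if dist x₀ y / 2 ≤ dist x₀ z then
        ENNReal.ofReal (dist x₀ z ^ p) else 0) ∂μ := by
  have h2 : ENNReal.ofReal (2 ^ p) ≠ 0 := by
    simp only [ne_eq, ENNReal.ofReal_eq_zero, not_le]; positivity
  unfold wCost
  rw [ENNReal.mul_iInf_of_ne h2 ENNReal.ofReal_ne_top, ENNReal.iInf_add]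
  refine le_iInf fun π => ?_
  rw [ENNReal.mul_iInf_of_ne h2 ENNReal.ofReal_ne_top, ENNReal.iInf_add]
  refine le_iInf fun hπ => ?_
  obtain ⟨_, hc1, hc2⟩ := hπ
  have m := aux_meas' p x₀
  have md : Measurable (fun z : X => dist x₀ z) := measurable_const.dist measurable_id
  have mi : Measurable (fun z : X => if dist x₀ y / 2 ≤ dist x₀ z then
        ENNReal.ofReal (dist x₀ z ^ p) else 0) :=
    Measurable.ite (measurableSet_le measurable_const md) m measurable_const
  have mi2 : Measurable (fun q : X × X => if dist x₀ y / 2 ≤ dist x₀ q.2 then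
        ENNReal.ofReal (dist x₀ q.2 ^ p) else 0) := mi.comp measurable_snd
  have ms : MeasurableSet (Prod.fst ⁻¹' {y} : Set (X × X)) :=
    measurable_fst (measurableSet_singleton y)
  rw [← hc1, ← hc2, lintegral_map mi measurable_snd,
    Measure.map_apply measurable_fst (measurableSet_singleton y),
    ← lintegral_const_mul _ (aux_meas p), ← lintegral_const_mul _ mi2,
    ← lintegral_add_left ((aux_meas p).const_mul _), ← lintegral_indicator_const ms]
  apply lintegral_mono
  intro q
  by_cases hq : q ∈ (Prod.fst ⁻¹' {y} : Set (X × X))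
  · rw [indicator_of_mem hq]
    have hq' : q.1 = y := hq
    refine aux_pt p hp _ _ _ dist_nonneg dist_nonneg dist_nonneg ?_
    rw [hq', add_comm, dist_comm y]
    exact dist_triangle _ _ _
  · rw [indicator_of_notMem hq]; exact zero_le

lemma aux_tail [MetricSpace X] [MeasurableSpace X] [BorelSpace X] [ProperSpace X]
    (p : ℝ) (x₀ : X) (μ : Measure X) (hμ : μ ∈ Pp p x₀) (r : ℕ → ℝ) (hr : Tendsto r atTop atTop) :
    Tendsto (fun n => ∫⁻ z, (if r n / 2 ≤ dist x₀ z then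
        ENNReal.ofReal (dist x₀ z ^ p) else 0) ∂μ) atTop (𝓝 0) := by
  have m := aux_meas' p x₀
  have md : Measurable (fun z : X => dist x₀ z) := measurable_const.dist measurable_id
  have h := tendsto_lintegral_of_dominated_convergence (μ := μ)
    (F := fun n z => if r n / 2 ≤ dist x₀ z then ENNReal.ofReal (dist x₀ z ^ p) else 0)
    (f := fun _ => 0)
    (fun z => ENNReal.ofReal (dist x₀ z ^ p))
    (fun n => Measurable.ite (measurableSet_le measurable_const md) m measurable_const)
    (fun n => Eventually.of_forall fun z => by
      dsimp only
      split_ifs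
      · exact le_rfl
      · exact zero_le)
    hμ.2.ne
    (Eventually.of_forall fun z => by
      apply tendsto_const_nhds.congr'
      filter_upwards [hr.eventually_gt_atTop (2 * dist x₀ z)] with n hn
      rw [if_neg]
      linarith)
  simpa using h

/-- In the Wasserstein space of order `p` over a non-compact proper complete separable metric
space, no closed ball around `δ_{x₀}` of positive radius is (sequentially) compact for `w_p`;
in particular `(P_p(X), w_p)` is not locally compact. -/
theorem wasserstein_ball_not_compact
    [MetricSpace X] [MeasurableSpace X] [BorelSpace X] [ProperSpace X] [CompleteSpace X]
    [TopologicalSpace.SeparableSpace X] (hX : ¬ CompactSpace X)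
    (p : ℝ) (hp : 1 ≤ p) (x₀ : X) (ε : ℝ) (hε : 0 < ε) :
    ¬ WpSeqCompact p {μ : Measure X | μ ∈ Pp p x₀ ∧ Wp p μ (Measure.dirac x₀) ≤ ε} := by
  have hp0 : 0 < p := by linarith
  intro hS
  choose x hx using fun n : ℕ => aux_unbounded hX x₀ (max ε n)
  have hxε : ∀ n, ε < dist x₀ (x n) := fun n => lt_of_le_of_lt (le_max_left _ _) (hx n)
  have hxn : ∀ n : ℕ, (n : ℝ) ≤ dist x₀ (x n) := fun n => (le_max_right _ _).trans (hx n).le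
  have hrt : Tendsto (fun n => dist x₀ (x n)) atTop atTop :=
    tendsto_atTop_mono hxn tendsto_natCast_atTop_atTop
  set t : ℕ → ℝ := fun n => (ε / dist x₀ (x n)) ^ p with ht
  have hr0 : ∀ n, 0 < dist x₀ (x n) := fun n => hε.trans (hxε n)
  have ht0 : ∀ n, 0 ≤ t n := fun n => Real.rpow_nonneg (div_nonneg hε.le (hr0 n).le) p
  have ht1 : ∀ n, t n ≤ 1 := fun n =>
    Real.rpow_le_one (div_nonneg hε.le (hr0 n).le) ((div_le_one (hr0 n)).2 (hxε n).le) hp0.le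
  have htr : ∀ n, t n * dist x₀ (x n) ^ p = ε ^ p := fun n => by
    rw [ht]
    dsimp only
    rw [← Real.mul_rpow (div_nonneg hε.le (hr0 n).le) (hr0 n).le, div_mul_cancel₀ _ (hr0 n).ne']
  set μs : ℕ → Measure X := fun n => mix (t n) (Measure.dirac (x n)) (Measure.dirac x₀) with hμs
  have hprob : ∀ n, IsProbabilityMeasure (μs n) := fun n => by
    constructor
    simp only [hμs, mix, Measure.add_apply, Measure.smul_apply, measure_univ, smul_eq_mul, mul_one]
    rw [← ENNReal.ofReal_add (ht0 n) (by linarith [ht1 n])]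
    simp
  have hint : ∀ n, ∫⁻ z, ENNReal.ofReal (dist x₀ z ^ p) ∂(μs n) = ENNReal.ofReal (ε ^ p) :=
    fun n => by
    simp only [hμs, mix]
    rw [lintegral_add_measure, lintegral_smul_measure, lintegral_smul_measure, lintegral_dirac,
      lintegral_dirac, dist_self, Real.zero_rpow hp0.ne', smul_eq_mul,
      ← ENNReal.ofReal_mul (ht0 n), htr]
    simp
  have hPp : ∀ n, μs n ∈ Pp p x₀ := fun n => ⟨hprob n, by
    unfold FiniteMoment; rw [hint]; exact ENNReal.ofReal_lt_top⟩
  have hmem : ∀ n, μs n ∈ {μ : Measure X | μ ∈ Pp p x₀ ∧ Wp p μ (Measure.dirac x₀) ≤ ε} := by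
    intro n
    refine ⟨hPp n, ?_⟩
    have := hprob n
    have h1 : wCost p (μs n) (Measure.dirac x₀) ≤ ENNReal.ofReal (ε ^ p) :=
      (aux_dirac p x₀ (μs n)).trans (hint n).le
    unfold Wp
    apply ENNReal.toReal_le_of_le_ofReal hε.le
    refine (ENNReal.rpow_le_rpow h1 (by positivity)).trans ?_
    rw [ENNReal.ofReal_rpow_of_nonneg (by positivity) (by positivity), ← Real.rpow_mul hε.le,
      mul_one_div_cancel hp0.ne', Real.rpow_one]
  obtain ⟨μ, ⟨hμ, -⟩, φ, hφ, hlim⟩ := hS μs hmem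
  have hcost : Tendsto (fun n => wCost p (μs (φ n)) μ) atTop (𝓝 0) := by
    have e : ∀ n, wCost p (μs (φ n)) μ = (ENNReal.ofReal (Wp p (μs (φ n)) μ)) ^ p := fun n => by
      have hf := aux_finite p hp x₀ _ _ (hPp (φ n)) hμ
      unfold Wp
      rw [ENNReal.ofReal_toReal (ENNReal.rpow_ne_top_of_nonneg (by positivity) hf.ne),
        ← ENNReal.rpow_mul, one_div_mul_cancel hp0.ne', ENNReal.rpow_one]
    simp_rw [e]
    have h1 := (ENNReal.continuous_rpow_const (y := p)).tendsto 0 |>.comp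
      ((ENNReal.continuous_ofReal.tendsto' 0 0 ENNReal.ofReal_zero).comp hlim)
    simpa [Function.comp_def, ENNReal.zero_rpow_of_pos hp0] using h1
  have htail := aux_tail p x₀ μ hμ (fun n => dist x₀ (x (φ n))) (hrt.comp hφ.tendsto_atTop)
  have hsum := (ENNReal.Tendsto.const_mul (a := ENNReal.ofReal (2 ^ p)) hcost
    (Or.inr ENNReal.ofReal_ne_top)).add (ENNReal.Tendsto.const_mul (a := ENNReal.ofReal (2 ^ p))
    htail (Or.inr ENNReal.ofReal_ne_top))
  simp only [mul_zero, add_zero] at hsum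
  have hle : ENNReal.ofReal (ε ^ p) ≤ 0 := by
    refine ge_of_tendsto' hsum fun n => le_trans ?_ (aux_key p hp x₀ (x (φ n)) (μs (φ n)) μ)
    rw [← htr (φ n), mul_comm, ENNReal.ofReal_mul (by positivity)]
    gcongr
    simp only [hμs, mix, Measure.add_apply, Measure.smul_apply, smul_eq_mul]
    refine le_trans ?_ le_self_add
    simp
  have : 0 < ε ^ p := by positivity
  simp only [nonpos_iff_eq_zero, ENNReal.ofReal_eq_zero] at hle
  linarith
end
end

section
/- Let X be a complete separable metric space, f: X -> X a continuous map with a fixed point x0 (f(x0) = x0), and 0 < eps < 1. Define P_eps: P(X) -> P(X) by P_eps(mu) = (1-eps) * f_*(mu) + eps * delta_{x0}. Then: (i) for every mu in P(X) the Levy-Prokhorov distance satisfies d_LP(P_eps(mu), f_*(mu)) <= eps; (ii) delta_{x0} is the unique fixed point of P_eps, and for every mu in P(X) the iterates P_eps^n(mu) converge weakly to delta_{x0} as n -> infinity. -/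
open MeasureTheory Topology Filter Metric Set
open scoped ENNReal NNReal

noncomputable section

variable {X : Type*}

lemma mix_univ_aux [MeasurableSpace X] (t : ℝ) (h0 : 0 ≤ t) (h1 : t ≤ 1) (μ ν : Measure X)
    [IsProbabilityMeasure μ] [IsProbabilityMeasure ν] : IsProbabilityMeasure (mix t μ ν) := by
  constructor
  simp only [mix, Measure.add_apply, Measure.smul_apply, measure_univ, smul_eq_mul, mul_one]
  rw [← ENNReal.ofReal_add h0 (by linarith)]
  simp

lemma iterate_aux [MetricSpace X] [MeasurableSpace X] [BorelSpace X]
    (f : X → X) (hf : Continuous f) (x₀ : X) (hfix : f x₀ = x₀)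
    (ε : ℝ) (hε0 : 0 < ε) (hε1 : ε < 1)
    (P : Measure X → Measure X)
    (hP : ∀ μ : Measure X, P μ = mix (1 - ε) (μ.map f) (Measure.dirac x₀))
    (μ : Measure X) (n : ℕ) :
    P^[n] μ = mix ((1 - ε) ^ n) (μ.map f^[n]) (Measure.dirac x₀) := by
  induction n with
  | zero => simp [mix]
  | succ n ih =>
    have hq0 : 0 ≤ (1 - ε) := by linarith
    have hqn : (1 - ε) ^ n ≤ 1 := pow_le_one₀ hq0 (by linarith)
    rw [Function.iterate_succ_apply', ih, hP, Function.iterate_succ']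
    unfold mix
    rw [Measure.map_add _ _ hf.measurable, Measure.map_smul, Measure.map_smul,
      Measure.map_map hf.measurable (hf.iterate n).measurable, Measure.map_dirac' hf.measurable,
      hfix, smul_add, smul_smul, smul_smul, add_assoc, ← add_smul,
      ← ENNReal.ofReal_mul hq0, ← ENNReal.ofReal_mul hq0,
      ← ENNReal.ofReal_add (mul_nonneg hq0 (by linarith)) (by linarith)]
    congr 3
    · ring
    · ring

/-- **Generic collapse under small noise.** Let `f : X → X` be continuous with fixed point
`x₀` and `0 < ε < 1`, and let `P_ε(μ) = (1-ε) f_*(μ) + ε δ_{x₀}`. Then (i) `P_ε` is within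
Lévy–Prokhorov distance `ε` of `f_*`; (ii) `δ_{x₀}` is the unique fixed point of `P_ε`
among probability measures, and all iterates `P_ε^n(μ)` converge weakly to `δ_{x₀}`. -/
theorem collapse_under_small_noise
    [MetricSpace X] [MeasurableSpace X] [BorelSpace X] [CompleteSpace X]
    [TopologicalSpace.SeparableSpace X]
    (f : X → X) (hf : Continuous f) (x₀ : X) (hfix : f x₀ = x₀)
    (ε : ℝ) (hε0 : 0 < ε) (hε1 : ε < 1)
    (P : Measure X → Measure X)
    (hP : ∀ μ : Measure X, P μ = mix (1 - ε) (μ.map f) (Measure.dirac x₀)) :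
    (∀ μ : Measure X, IsProbabilityMeasure μ →
      levyProkhorovDist (P μ) (μ.map f) ≤ ε) ∧
    (P (Measure.dirac x₀) = Measure.dirac x₀) ∧
    (∀ μ : Measure X, IsProbabilityMeasure μ → P μ = μ → μ = Measure.dirac x₀) ∧
    (∀ μ : Measure X, IsProbabilityMeasure μ →
      WeakConv (fun n => P^[n] μ) (Measure.dirac x₀)) := by
  have hq0 : 0 ≤ 1 - ε := by linarith
  have hconv : ∀ μ : Measure X, IsProbabilityMeasure μ →
      WeakConv (fun n => P^[n] μ) (Measure.dirac x₀) := by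
    intro μ hμ g
    have hqn : ∀ n : ℕ, (1 - ε) ^ n ≤ 1 := fun n => pow_le_one₀ hq0 (by linarith)
    have key : ∀ n, ∫ x, g x ∂(P^[n] μ) =
        (1 - ε) ^ n * ∫ x, g x ∂(μ.map f^[n]) + (1 - (1 - ε) ^ n) * g x₀ := by
      intro n
      have := Measure.isProbabilityMeasure_map (μ := μ) (hf.iterate n).measurable.aemeasurable
      rw [iterate_aux f hf x₀ hfix ε hε0 hε1 P hP μ n]
      unfold mix
      rw [integral_add_measure ((g.integrable _).smul_measure ENNReal.ofReal_ne_top)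
        ((g.integrable _).smul_measure ENNReal.ofReal_ne_top), integral_smul_measure,
        integral_smul_measure, integral_dirac, ENNReal.toReal_ofReal (pow_nonneg hq0 n),
        ENNReal.toReal_ofReal (by linarith [hqn n])]
      simp
    have hpow : Tendsto (fun n : ℕ => (1 - ε) ^ n) atTop (𝓝 0) :=
      tendsto_pow_atTop_nhds_zero_of_lt_one hq0 (by linarith)
    simp only [key, integral_dirac]
    have h1 : Tendsto (fun n : ℕ => (1 - ε) ^ n * ∫ x, g x ∂(μ.map f^[n])) atTop (𝓝 0) := by
      apply squeeze_zero_norm (a := fun n : ℕ => (1 - ε) ^ n * ‖g‖)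
      · intro n
        have := Measure.isProbabilityMeasure_map (μ := μ) (hf.iterate n).measurable.aemeasurable
        rw [norm_mul, Real.norm_of_nonneg (pow_nonneg hq0 n)]
        exact mul_le_mul_of_nonneg_left (g.norm_integral_le_norm _) (pow_nonneg hq0 n)
      · simpa using hpow.mul_const ‖g‖
    simpa using h1.add ((hpow.const_sub 1).mul_const (g x₀))
  refine ⟨?_, ?_, ?_, hconv⟩
  · intro μ hμ
    have := Measure.isProbabilityMeasure_map (μ := μ) hf.measurable.aemeasurable
    have := mix_univ_aux (1 - ε) hq0 (by linarith) (μ.map f) (Measure.dirac x₀)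
    rw [← hP] at this
    apply levyProkhorovDist_le_of_forall_le _ _ hε0.le
    intro δ B hδ hB
    have hsub : B ⊆ thickening δ B := self_subset_thickening (hε0.trans hδ) B
    rw [hP]
    simp only [mix, Measure.add_apply, Measure.smul_apply, smul_eq_mul, sub_sub_cancel]
    refine add_le_add ?_ ?_
    · refine le_trans (mul_le_of_le_one_left' ?_) (measure_mono hsub)
      exact ENNReal.ofReal_le_one.2 (by linarith)
    · refine le_trans (mul_le_of_le_one_right' prob_le_one) (ENNReal.ofReal_le_ofReal hδ.le)
  · rw [hP, Measure.map_dirac' hf.measurable, hfix]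
    unfold mix
    rw [← add_smul, ← ENNReal.ofReal_add hq0 (by linarith)]
    simp
  · intro μ hμ h
    apply ext_of_forall_integral_eq_of_IsFiniteMeasure
    intro g
    have h2 := hconv μ hμ g
    simp only [Function.iterate_fixed h] at h2
    exact tendsto_nhds_unique tendsto_const_nhds h2
end
end
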